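/- arXiv:1210.5869 — 2 statements merged into one kernel-verified Lean document; each statement's English description precedes it below -/
import Mathlib

section
/- Let ℓ ≥ 2 and n = 3ℓ+2. The maximum of P(S;n) over all subsets S of {1,…,n} equals 3^{−ℓ}·n!, i.e. 3^{ℓ} times the maximum equals n!. -/
/-- `i` (1-based, with `1 < i < n`) is a peak of the permutation `σ` of `{1,…,n}`
(represented as a permutation of `Fin n`, position `j` (1-based) being index `j-1`). -/
def IsPeak {n : ℕ} (σ : Equiv.Perm (Fin n)) (i : ℕ) : Prop :=
  ∃ (h₂ : 2 ≤ i) (h₃ : i < n),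
    σ ⟨i - 2, by omega⟩ < σ ⟨i - 1, by omega⟩ ∧ σ ⟨i, h₃⟩ < σ ⟨i - 1, by omega⟩

open Classical in
/-- The peak set of a permutation of `{1,…,n}` (as a set of 1-based positions). -/
noncomputable def peakSet {n : ℕ} (σ : Equiv.Perm (Fin n)) : Finset ℕ :=
  (Finset.range n).filter (fun i => IsPeak σ i)

/-- `P(S;n)`: the number of permutations of `{1,…,n}` with peak set `S`. -/
noncomputable def numPeakSet (n : ℕ) (S : Finset ℕ) : ℕ :=
  Nat.card {σ : Equiv.Perm (Fin n) // peakSet σ = S}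

/-- `c` is a composition of `n`: a list of positive integers summing to `n`. -/
def IsComposition (n : ℕ) (c : List ℕ) : Prop :=
  (∀ x ∈ c, 0 < x) ∧ c.sum = n

/-- The set `S(c)` of proper partial sums of the composition `c`. -/
def compPeaks (c : List ℕ) : Finset ℕ :=
  (Finset.range (c.length - 1)).image (fun i => (c.take (i + 1)).sum)

/-- `P(c)`: the number of permutations of `{1,…,|c|}` whose peak set is `S(c)`. -/
noncomputable def Pcomp (c : List ℕ) : ℕ :=
  numPeakSet c.sum (compPeaks c)

/-- A composition is maximal if `P(b) ≤ P(c)` for every composition `b` of the same size. -/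
def IsMaximal (c : List ℕ) : Prop :=
  ∀ b : List ℕ, IsComposition c.sum b → Pcomp b ≤ Pcomp c


/-!
Write `w x = 2 ^ (x - 2) / (x - 1)!` for the probability that a random arrangement of `x - 1`
letters has no peak, and `r = 3 ^ (-1 / 3)`.

*Upper bound.* Let `Q s t` be the probability that a random arrangement of the letters strictly
between the positions `s` and `t` has its peaks exactly at the elements of `S`. The largest letter
sits at a peak or at an end of the window, and given its position the two sides are independent,
so `(t - s - 1) * Q s t ≤ ∑ i ∈ S ∩ Ioo s t, Q s i * Q i t` up to two end terms. Induction along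
this recursion gives `Q s t ≤ w (f - s) * w (t - l) * r ^ (l - f) / 3`, where `f` and `l` are the
first and the last element of `S` in the window: by Cauchy–Schwarz it is enough to bound
`∑ (Q s i / r ^ i) ^ 2` and `∑ (Q i t * r ^ i) ^ 2`, and since `(w x / (3 * r ^ x)) ^ 2 ≤ x / 3`
the inductive bound makes both sums telescope. Finally `w x ≤ 3 * r ^ x` turns the bound for the
whole permutation of `n` letters into `3 * r ^ (n + 1)`, which is `3 ^ (-ℓ)` for `n = 3 * ℓ + 2`.

*Lower bound.* The events that `3, 6, …, 3 * ℓ` are peaks concern disjoint windows of three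
letters, so they are independent, each of probability `1 / 3`. Together they force the peak set,
because every other interior position is next to one of these peaks.
-/

open Finset
open scoped Nat

section Pattern

variable {α : Type*} [LinearOrder α] {a b : ℕ} {e : Fin a ↪ α} {e' : Fin b ↪ α}

/-- The relative order of the entries of `σ` in the positions `e 0, …, e (a - 1)`, encoded as the
permutation of `Fin a` whose entries compare in the same way. -/
def patternAlong (e : Fin a ↪ α) (σ : Equiv.Perm α) : Equiv.Perm (Fin a) :=
  (Tuple.sort (σ ∘ e))⁻¹

theorem patternAlong_lt_iff (σ : Equiv.Perm α) {j k : Fin a} :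
    patternAlong e σ j < patternAlong e σ k ↔ σ (e j) < σ (e k) := by
  have hmono : StrictMono ((σ ∘ e) ∘ Tuple.sort (σ ∘ e)) :=
    (Tuple.monotone_sort _).strictMono_of_injective
      ((σ.injective.comp e.injective).comp (Equiv.injective _))
  simpa [patternAlong] using
    (hmono.lt_iff_lt (a := patternAlong e σ j) (b := patternAlong e σ k)).symm

theorem patternAlong_mul_viaFintypeEmbedding (σ : Equiv.Perm α) (τ : Equiv.Perm (Fin a)) :
    patternAlong e (σ * τ.viaFintypeEmbedding e) = patternAlong e σ * τ := by
  have hcomp : ⇑(σ * τ.viaFintypeEmbedding e) ∘ e = (σ ∘ e) ∘ τ := by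
    ext j
    simp
  have hsort : τ * Tuple.sort ((σ ∘ e) ∘ τ) = Tuple.sort (σ ∘ e) :=
    Equiv.ext fun j => σ.injective.comp e.injective
      (congrFun (Tuple.comp_perm_comp_sort_eq_comp_sort (f := σ ∘ e) (σ := τ)) j)
  rw [patternAlong, patternAlong, hcomp, ← hsort, mul_inv_rev, inv_mul_cancel_right]

theorem patternAlong_mul_viaFintypeEmbedding_of_disjoint
    (hd : Disjoint (Set.range e) (Set.range e')) (σ : Equiv.Perm α) (τ : Equiv.Perm (Fin a)) :
    patternAlong e' (σ * τ.viaFintypeEmbedding e) = patternAlong e' σ := by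
  have hcomp : ⇑(σ * τ.viaFintypeEmbedding e) ∘ e' = σ ∘ e' := by
    ext j
    have hj : e' j ∉ Set.range e := Set.disjoint_right.mp hd ⟨j, rfl⟩
    simp [Equiv.Perm.viaFintypeEmbedding_apply_notMem_range _ _ hj]
  rw [patternAlong, patternAlong, hcomp]

end Pattern

section Equidistribution

variable {α : Type*} [LinearOrder α] {a b : ℕ} {e : Fin a ↪ α} {e' : Fin b ↪ α}
  {E : Finset (Equiv.Perm α)}

/-- `E` is stable under rearranging the entries of a permutation in the positions `Set.range e`,
so that all patterns along `e` are equally likely in `E`. -/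
def IsRearrangementStable (e : Fin a ↪ α) (E : Finset (Equiv.Perm α)) : Prop :=
  ∀ σ ∈ E, ∀ τ : Equiv.Perm (Fin a), σ * τ.viaFintypeEmbedding e ∈ E

theorem IsRearrangementStable.filter_patternAlong (hE : IsRearrangementStable e E)
    (hd : Disjoint (Set.range e) (Set.range e')) (p : Equiv.Perm (Fin b) → Prop)
    [DecidablePred p] :
    IsRearrangementStable e {σ ∈ E | p (patternAlong e' σ)} := by
  intro σ hσ τ
  rw [mem_filter] at hσ ⊢
  rw [patternAlong_mul_viaFintypeEmbedding_of_disjoint hd]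
  exact ⟨hE σ hσ.1 τ, hσ.2⟩

theorem IsRearrangementStable.card_filter_patternAlong_eq_mul_factorial
    (hE : IsRearrangementStable e E) (π : Equiv.Perm (Fin a)) :
    #{σ ∈ E | patternAlong e σ = π} * a ! = #E := by
  have card_le (π ρ : Equiv.Perm (Fin a)) :
      #{σ ∈ E | patternAlong e σ = π} ≤ #{σ ∈ E | patternAlong e σ = ρ} := by
    refine card_le_card_of_injOn (· * (π⁻¹ * ρ).viaFintypeEmbedding e) (fun σ hσ => ?_)
      (mul_left_injective _).injOn
    rw [mem_coe, mem_filter] at hσ ⊢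
    exact ⟨hE σ hσ.1 _, by
      rw [patternAlong_mul_viaFintypeEmbedding, hσ.2, mul_inv_cancel_left]⟩
  rw [card_eq_sum_card_fiberwise (s := E) (f := patternAlong e) (t := univ) fun _ _ => mem_univ _,
    sum_congr rfl fun ρ _ => (card_le ρ π).antisymm (card_le π ρ), sum_const, card_univ,
    Fintype.card_perm, Fintype.card_fin, smul_eq_mul, mul_comm]

theorem IsRearrangementStable.card_filter_patternAlong_mul_factorial
    (hE : IsRearrangementStable e E) (p : Equiv.Perm (Fin a) → Prop) [DecidablePred p] :
    #{σ ∈ E | p (patternAlong e σ)} * a ! = #E * #{π | p π} := by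
  have hfiber (π : Equiv.Perm (Fin a)) (hπ : p π) :
      #{σ ∈ E | p (patternAlong e σ) ∧ patternAlong e σ = π} * a ! = #E := by
    rw [← hE.card_filter_patternAlong_eq_mul_factorial π]
    congr 3
    ext σ
    exact ⟨And.right, fun h => ⟨h ▸ hπ, h⟩⟩
  rw [card_eq_sum_card_fiberwise (f := patternAlong e) (t := ({π | p π} : Finset _))
      fun σ hσ => by simpa using (mem_filter.mp hσ).2, sum_mul]
  simp only [filter_filter]
  rw [sum_congr rfl fun π hπ => hfiber π (by simpa using hπ), sum_const, smul_eq_mul, mul_comm]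

theorem IsRearrangementStable.card_filter_patternAlong_and_mul_factorial
    (hE : IsRearrangementStable e E) (hE' : IsRearrangementStable e' E)
    (hd : Disjoint (Set.range e) (Set.range e'))
    (p : Equiv.Perm (Fin a) → Prop) [DecidablePred p]
    (q : Equiv.Perm (Fin b) → Prop) [DecidablePred q] :
    #{σ ∈ E | p (patternAlong e σ) ∧ q (patternAlong e' σ)} * (a ! * b !) =
      #E * (#{π | p π} * #{π | q π}) := by
  have hp := hE.card_filter_patternAlong_mul_factorial p
  have hq := (hE'.filter_patternAlong hd.symm p).card_filter_patternAlong_mul_factorial q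
  rw [filter_filter] at hq
  rw [mul_comm (a !), ← mul_assoc, hq, mul_right_comm, hp, mul_assoc]

theorem isRearrangementStable_filter_apply_eq [Fintype α] {i : α} (hi : i ∉ Set.range e) (m : α) :
    IsRearrangementStable e ({σ | σ i = m} : Finset (Equiv.Perm α)) := by
  intro σ hσ τ
  simpa [Equiv.Perm.viaFintypeEmbedding_apply_notMem_range _ _ hi] using hσ

end Equidistribution

theorem card_filter_perm_apply_eq {α : Type*} [DecidableEq α] [Fintype α] (i m : α) :
    #{σ : Equiv.Perm α | σ i = m} = (Fintype.card α - 1)! := by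
  have card_le (j k : α) :
      #{σ : Equiv.Perm α | σ i = j} ≤ #{σ : Equiv.Perm α | σ i = k} := by
    refine card_le_card_of_injOn (Equiv.swap j k * ·) (fun σ hσ => ?_)
      (mul_right_injective _).injOn
    rw [mem_coe, mem_filter_univ] at hσ ⊢
    simp [hσ]
  have card_perm : #(univ : Finset (Equiv.Perm α)) =
      Fintype.card α * #{σ : Equiv.Perm α | σ i = m} := by
    rw [card_eq_sum_card_fiberwise (f := fun σ : Equiv.Perm α => σ i) (t := univ)
        fun _ _ => mem_univ _,
      sum_congr rfl fun j _ => (card_le j m).antisymm (card_le m j), sum_const, card_univ,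
      smul_eq_mul]
  have hcard : 0 < Fintype.card α := Fintype.card_pos_iff.mpr ⟨i⟩
  rw [← Nat.mul_right_inj hcard.ne', Nat.mul_factorial_pred hcard.ne', ← card_perm, card_univ,
    Fintype.card_perm]

section Peaks

variable {n : ℕ} {σ : Equiv.Perm (Fin n)} {i : ℕ}

theorem mem_peakSet : i ∈ peakSet σ ↔ IsPeak σ i := by
  simp only [peakSet, mem_filter, mem_range, and_iff_right_iff_imp]
  exact fun ⟨_, hi, _⟩ => hi

theorem isPeak_iff_exists : IsPeak σ i ↔ ∃ x y z : Fin n,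
    (x + 2 : ℕ) = i ∧ (y + 1 : ℕ) = i ∧ (z : ℕ) = i ∧ σ x < σ y ∧ σ z < σ y := by
  constructor
  · rintro ⟨h₂, h₃, hσ⟩
    exact ⟨⟨i - 2, by lia⟩, ⟨i - 1, by lia⟩, ⟨i, h₃⟩, by simp; lia, by simp; lia, rfl, hσ⟩
  · rintro ⟨⟨x, hx⟩, ⟨y, hy⟩, ⟨z, hz⟩, hxi, hyi, rfl, hσ⟩
    obtain rfl : y = x + 1 := by simpa using hyi.trans hxi.symm
    obtain rfl : x + 2 = z := hxi
    exact ⟨by lia, hz, hσ⟩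

theorem peakSet_subset_Ioo : peakSet σ ⊆ Ioo 1 n := fun _ hi =>
  have ⟨hi₂, hin, _⟩ := mem_peakSet.mp hi
  mem_Ioo.mpr ⟨hi₂, hin⟩

theorem IsPeak.not_isPeak_add_one (hi : IsPeak σ i) : ¬ IsPeak σ (i + 1) := by
  obtain ⟨_, _, _, hi⟩ := hi
  rintro ⟨_, _, hi', _⟩
  exact hi.asymm (by simpa [show i + 1 - 2 = i - 1 by lia] using hi')

theorem isPeak_of_forall_le {j : Fin n} (hmax : ∀ k, σ k ≤ σ j) (hj₀ : 0 < j.1)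
    (hjn : j.1 + 1 < n) : IsPeak σ (j + 1) := by
  have lt_apply (k : Fin n) (hk : k ≠ j) : σ k < σ j :=
    (hmax k).lt_of_ne (σ.injective.ne hk)
  exact ⟨by lia, hjn, lt_apply _ (by simp [Fin.ext_iff]; lia), lt_apply _ (by simp [Fin.ext_iff])⟩

theorem not_isPeak_of_forall_le {j : Fin n} (hmax : ∀ k, σ k ≤ σ j) :
    ¬ IsPeak σ j ∧ ¬ IsPeak σ (j + 2) := by
  constructor
  · rintro ⟨_, _, _, h⟩
    exact h.not_ge (hmax _)
  · rintro ⟨_, _, h, _⟩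
    exact h.not_ge (hmax _)

theorem numPeakSet_eq_card (n : ℕ) (S : Finset ℕ) :
    numPeakSet n S = #{σ : Equiv.Perm (Fin n) | peakSet σ = S} := by
  rw [numPeakSet, Nat.card_eq_fintype_card, Fintype.card_subtype]

theorem numPeakSet_le_factorial (n : ℕ) (S : Finset ℕ) : numPeakSet n S ≤ n ! := by
  rw [numPeakSet_eq_card, ← Fintype.card_fin n, ← Fintype.card_perm, Fintype.card_fin]
  exact card_le_univ _

end Peaks

section Window

variable {n s a : ℕ} {S : Finset ℕ}

/-- The embedding of the window of `a` consecutive positions that follow the first `s` ones. -/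
def windowEmb (h : s + a ≤ n) : Fin a ↪ Fin n :=
  (Fin.natAddEmb s).trans (Fin.castLEEmb h)

@[simp]
theorem val_windowEmb (h : s + a ≤ n) (j : Fin a) : (windowEmb h j : ℕ) = s + j :=
  rfl

/-- The elements of `S` that can be peaks of the window of `a` positions that follow the
first `s` ones, numbered relative to this window. -/
def windowPeaks (S : Finset ℕ) (s a : ℕ) : Finset ℕ :=
  {i ∈ Ioo 1 a | s + i ∈ S}

theorem mem_range_windowEmb (h : s + a ≤ n) (j : Fin n) :
    j ∈ Set.range (windowEmb h) ↔ s ≤ j ∧ j < s + a := by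
  constructor
  · rintro ⟨k, rfl⟩
    simp
  · rintro ⟨hsj, hja⟩
    exact ⟨⟨j - s, by lia⟩, Fin.ext (by simpa using Nat.add_sub_of_le hsj)⟩

theorem isPeak_patternAlong_windowEmb_iff (h : s + a ≤ n) (σ : Equiv.Perm (Fin n)) (i : ℕ) :
    IsPeak (patternAlong (windowEmb h) σ) i ↔ 1 < i ∧ i < a ∧ IsPeak σ (s + i) := by
  simp only [isPeak_iff_exists, patternAlong_lt_iff]
  constructor
  · rintro ⟨x, y, z, hx, hy, hz, hσ⟩
    exact ⟨by lia, by lia, windowEmb h x, windowEmb h y, windowEmb h z, by simp; lia, by simp; lia,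
      by simp; lia, hσ⟩
  · rintro ⟨hi, hia, x, y, z, hx, hy, hz, hσ⟩
    obtain ⟨x, rfl⟩ := (mem_range_windowEmb h x).mpr (by lia)
    obtain ⟨y, rfl⟩ := (mem_range_windowEmb h y).mpr (by lia)
    obtain ⟨z, rfl⟩ := (mem_range_windowEmb h z).mpr (by lia)
    simp only [val_windowEmb] at hx hy hz
    exact ⟨x, y, z, by lia, by lia, by lia, hσ⟩

theorem peakSet_patternAlong_windowEmb (h : s + a ≤ n) (σ : Equiv.Perm (Fin n)) :
    peakSet (patternAlong (windowEmb h) σ) = windowPeaks (peakSet σ) s a := by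
  ext i
  simp only [mem_peakSet, isPeak_patternAlong_windowEmb_iff, windowPeaks, mem_filter, mem_Ioo,
    and_assoc]

theorem windowPeaks_windowPeaks {b u : ℕ} (h : u + b ≤ a) :
    windowPeaks (windowPeaks S s a) u b = windowPeaks S (s + u) b := by
  ext i
  simp only [windowPeaks, mem_filter, mem_Ioo, add_assoc]
  grind

theorem windowPeaks_zero_eq_self (hS : S ⊆ Ioo 1 n) : windowPeaks S 0 n = S := by
  simpa [windowPeaks, filter_mem_eq_inter] using hS

theorem card_apply_eq_and_peakSet_eq_mul_factorial_le (S : Finset ℕ) (i m : Fin n) :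
    #{σ : Equiv.Perm (Fin n) | σ i = m ∧ peakSet σ = S} * (i ! * (n - (i + 1))!) ≤
      (n - 1)! * (numPeakSet i (windowPeaks S 0 i) *
        numPeakSet (n - (i + 1)) (windowPeaks S (i + 1) (n - (i + 1)))) := by
  let left : Fin i ↪ Fin n := windowEmb (s := 0) (by lia)
  let right : Fin (n - (i + 1)) ↪ Fin n := windowEmb (s := i + 1) (by lia)
  have hleft : i ∉ Set.range left := by rw [mem_range_windowEmb]; lia
  have hright : i ∉ Set.range right := by rw [mem_range_windowEmb]; lia
  have hdisj : Disjoint (Set.range left) (Set.range right) := by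
    rw [Set.disjoint_left]
    intro j hj
    simp only [left, right, mem_range_windowEmb] at hj ⊢
    lia
  have hcount := IsRearrangementStable.card_filter_patternAlong_and_mul_factorial
    (isRearrangementStable_filter_apply_eq hleft m) (isRearrangementStable_filter_apply_eq hright m)
    hdisj (peakSet · = windowPeaks S 0 i) (peakSet · = windowPeaks S (i + 1) (n - (i + 1)))
  rw [card_filter_perm_apply_eq, Fintype.card_fin, ← numPeakSet_eq_card, ← numPeakSet_eq_card,
    filter_filter] at hcount
  rw [← hcount]
  gcongr
  rintro rfl
  exact ⟨peakSet_patternAlong_windowEmb _ _, peakSet_patternAlong_windowEmb _ _⟩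

end Window

section WindowProb

variable {S : Finset ℕ} {s t : ℕ}

/-- The probability that a uniformly random arrangement of the letters in the positions strictly
between `s` and `t` has exactly the peaks prescribed by `S` in the interior of this window. -/
noncomputable def windowProb (S : Finset ℕ) (s t : ℕ) : ℝ :=
  numPeakSet (t - s - 1) (windowPeaks S s (t - s - 1)) / (t - s - 1)!

theorem windowProb_nonneg : 0 ≤ windowProb S s t := by
  unfold windowProb
  positivity

theorem windowProb_le_one : windowProb S s t ≤ 1 :=
  div_le_one_of_le₀ (mod_cast numPeakSet_le_factorial _ _) (by positivity)

theorem card_apply_eq_and_peakSet_eq_windowPeaks_le {n : ℕ} (hn : t - s - 1 = n) (i m : Fin n) :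
    (#{σ : Equiv.Perm (Fin n) | σ i = m ∧ peakSet σ = windowPeaks S s n} : ℝ) ≤
      (n - 1)! * (windowProb S s (s + i + 1) * windowProb S (s + i + 1) t) := by
  have hcount := card_apply_eq_and_peakSet_eq_mul_factorial_le (windowPeaks S s n) i m
  rw [windowPeaks_windowPeaks (by lia), windowPeaks_windowPeaks (by lia), add_zero] at hcount
  simp only [windowProb, show s + i + 1 - s - 1 = (i : ℕ) by lia,
    show t - (s + i + 1) - 1 = n - (i + 1) by lia]
  rw [div_mul_div_comm, ← mul_div_assoc, le_div_iff₀ (by positivity)]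
  exact_mod_cast hcount

theorem mem_or_of_peakSet_eq_windowPeaks {n : ℕ} (hn : t - s - 1 = n) (hs : s + 1 ∉ S)
    (ht : t - 1 ∉ S) {σ : Equiv.Perm (Fin n)} (hσ : peakSet σ = windowPeaks S s n) {i : Fin n}
    (hi : ∀ j, σ j ≤ σ i) (hn₂ : 2 ≤ n) :
    s + i + 1 ∈ S ∨ (i : ℕ) = 0 ∧ s + 2 ∉ S ∨ (i + 1 : ℕ) = n ∧ t - 2 ∉ S := by
  have isPeak_iff (k : ℕ) : IsPeak σ k ↔ (1 < k ∧ k < n) ∧ s + k ∈ S := by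
    rw [← mem_peakSet, hσ, windowPeaks, mem_filter, mem_Ioo]
  have hpeak := isPeak_of_forall_le hi
  obtain ⟨hleft, hright⟩ := not_isPeak_of_forall_le hi
  rw [isPeak_iff] at hpeak hleft hright
  obtain hi₀ | hi₀ := Nat.eq_zero_or_pos i
  · rw [hi₀] at hright
    grind
  · grind

theorem mul_windowProb_le_sum_filter (hst : s + 2 < t) (hs : s + 1 ∉ S) (ht : t - 1 ∉ S) :
    (t - s - 1 : ℕ) * windowProb S s t ≤
      ∑ i ∈ Ioo s t with i ∈ S ∨ i = s + 1 ∧ s + 2 ∉ S ∨ i = t - 1 ∧ t - 2 ∉ S,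
        windowProb S s i * windowProb S i t := by
  generalize hn : t - s - 1 = n
  let top : Fin n := ⟨n - 1, by lia⟩
  have le_top (j : Fin n) : j ≤ top := Fin.le_def.mpr (by simp [top]; lia)
  let F : Finset (Equiv.Perm (Fin n)) := {σ | peakSet σ = windowPeaks S s n}
  let maxPos (σ : Equiv.Perm (Fin n)) : ℕ := s + σ.symm top + 1
  have hF : n ! * windowProb S s t = #F := by
    rw [windowProb, hn, numPeakSet_eq_card, mul_div_cancel₀ _ (by positivity)]
  have maxPos_mem : ∀ σ ∈ F, maxPos σ ∈
      ({i ∈ Ioo s t | i ∈ S ∨ i = s + 1 ∧ s + 2 ∉ S ∨ i = t - 1 ∧ t - 2 ∉ S} : Finset ℕ) := by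
    intro σ hσ
    have := mem_or_of_peakSet_eq_windowPeaks (i := σ.symm top) hn hs ht (by simpa [F] using hσ)
      (by simpa using fun j => le_top (σ j)) (by lia)
    simp only [maxPos, mem_filter, mem_Ioo]
    grind
  have card_fiber_le (i : ℕ) (hi : i ∈ Ioo s t) : (#{σ ∈ F | maxPos σ = i} : ℝ) ≤
      (n - 1)! * (windowProb S s i * windowProb S i t) := by
    obtain ⟨i, rfl⟩ : ∃ j : Fin n, s + j + 1 = i := by
      rw [mem_Ioo] at hi
      exact ⟨⟨i - s - 1, by lia⟩, by simp; lia⟩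
    refine le_trans (mod_cast card_le_card fun σ hσ => ?_)
      (card_apply_eq_and_peakSet_eq_windowPeaks_le hn i top)
    obtain ⟨hσS, hσi⟩ := mem_filter.mp hσ
    have hσi : σ.symm top = i := Fin.ext (by simpa [maxPos] using hσi)
    simpa [← hσi, F] using hσS
  have hn₀ : n ≠ 0 := by lia
  rw [← mul_le_mul_iff_right₀ (show (0 : ℝ) < (n - 1)! by positivity), ← mul_assoc,
    mul_comm _ (n : ℝ), ← Nat.cast_mul, Nat.mul_factorial_pred hn₀, hF,
    card_eq_sum_card_fiberwise maxPos_mem, Nat.cast_sum, mul_sum]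
  exact sum_le_sum fun i hi => card_fiber_le i (mem_filter.mp hi).1

theorem mul_windowProb_le_sum (hst : s + 2 < t) (hs : s + 1 ∉ S) (ht : t - 1 ∉ S) :
    (t - s - 1 : ℕ) * windowProb S s t ≤
      (∑ i ∈ S ∩ Ioo s t, windowProb S s i * windowProb S i t) +
        (if s + 2 ∈ S then 0 else windowProb S (s + 1) t) +
        (if t - 2 ∈ S then 0 else windowProb S s (t - 1)) := by
  have hprod (i : ℕ) : 0 ≤ windowProb S s i * windowProb S i t :=
    mul_nonneg windowProb_nonneg windowProb_nonneg
  calc (t - s - 1 : ℕ) * windowProb S s t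
    _ ≤ ∑ i ∈ Ioo s t with i ∈ S ∨ i = s + 1 ∧ s + 2 ∉ S ∨ i = t - 1 ∧ t - 2 ∉ S,
          windowProb S s i * windowProb S i t := mul_windowProb_le_sum_filter hst hs ht
    _ ≤ ∑ i ∈ Ioo s t, ((if i ∈ S then windowProb S s i * windowProb S i t else 0) +
          (if s + 1 = i then if s + 2 ∈ S then 0 else windowProb S i t else 0) +
          (if t - 1 = i then if t - 2 ∈ S then 0 else windowProb S s i else 0)) := by
      rw [sum_filter]
      gcongr with i
      have hleft : windowProb S s i * windowProb S i t ≤ windowProb S i t :=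
        mul_le_of_le_one_left windowProb_nonneg windowProb_le_one
      have hright : windowProb S s i * windowProb S i t ≤ windowProb S s i :=
        mul_le_of_le_one_right windowProb_nonneg windowProb_le_one
      have := hprod i
      grind
    _ = _ := by
      have hs_mem : s + 1 ∈ Ioo s t := mem_Ioo.mpr (by lia)
      have ht_mem : t - 1 ∈ Ioo s t := mem_Ioo.mpr (by lia)
      rw [sum_add_distrib, sum_add_distrib, sum_ite_eq, sum_ite_eq, ← sum_filter,
        filter_mem_eq_inter, inter_comm, if_pos hs_mem, if_pos ht_mem]

end WindowProb

section Telescoping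

variable {α M : Type*} [LinearOrder α] [AddCommGroup M] [PartialOrder M] [IsOrderedAddMonoid M]
  {T : Finset α} {u g : α → M} {f l : α}

theorem sum_le_add_sub_of_isGreatest_lt (hf : IsLeast (T : Set α) f)
    (hl : IsGreatest (T : Set α) l)
    (h : ∀ i ∈ T, ∀ p, IsGreatest {j | j ∈ T ∧ j < i} p → u i ≤ g i - g p) :
    ∑ i ∈ T, u i ≤ u f + (g l - g f) := by
  induction T using Finset.induction_on_max generalizing l with
  | empty => exact absurd hf.1 (by simp)
  | insert a T ha ih =>
    have haT : a ∉ T := fun haT => (ha a haT).false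
    obtain rfl : l = a := (mem_insert.mp hl.1).resolve_right fun hlT =>
      (ha l hlT).not_ge (hl.2 (mem_insert_self a T))
    obtain rfl | hT := T.eq_empty_or_nonempty
    · obtain rfl : f = l := by simpa using hf.1
      simp
    have hmax := T.isGreatest_max' hT
    have hfT : IsLeast (T : Set α) f := by
      refine ⟨(mem_insert.mp hf.1).resolve_left ?_, fun i hi => hf.2 (mem_insert_of_mem hi)⟩
      rintro rfl
      exact (ha _ hmax.1).not_ge (hf.2 (mem_insert_of_mem hmax.1))
    have hpred (i : α) (hi : i ∈ T) (p : α) (hp : IsGreatest {j | j ∈ T ∧ j < i} p) :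
        u i ≤ g i - g p := by
      refine h i (mem_insert_of_mem hi) p ⟨⟨mem_insert_of_mem hp.1.1, hp.1.2⟩, fun j hj => ?_⟩
      exact hp.2 ⟨(mem_insert.mp hj.1).resolve_left (hj.2.trans (ha i hi)).ne, hj.2⟩
    have hlast : u l ≤ g l - g (T.max' hT) := by
      refine h l (mem_insert_self l T) _ ⟨⟨mem_insert_of_mem hmax.1, ha _ hmax.1⟩, fun j hj => ?_⟩
      exact hmax.2 ((mem_insert.mp hj.1).resolve_left hj.2.ne)
    calc ∑ i ∈ insert l T, u i
      _ = u l + ∑ i ∈ T, u i := sum_insert haT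
      _ ≤ (g l - g (T.max' hT)) + (u f + (g (T.max' hT) - g f)) :=
        add_le_add hlast (ih hfT hmax hpred)
      _ = u f + (g l - g f) := by abel

theorem sum_le_add_sub_of_isLeast_gt (hf : IsLeast (T : Set α) f)
    (hl : IsGreatest (T : Set α) l)
    (h : ∀ i ∈ T, ∀ p, IsLeast {j | j ∈ T ∧ i < j} p → u i ≤ g p - g i) :
    ∑ i ∈ T, u i ≤ u l + (g l - g f) := by
  rw [← neg_sub_neg]
  exact sum_le_add_sub_of_isGreatest_lt (α := αᵒᵈ) (g := fun i => -g i) hl hf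
    fun i hi p hp => (h i hi p hp).trans_eq (neg_sub_neg _ _).symm

end Telescoping

section NoPeakProb

variable {x : ℕ} {r : ℝ}

/-- The probability `2 ^ (x - 2) / (x - 1)!` that a uniformly random arrangement of the `x - 1 ≥ 1`
letters between two positions at distance `x` has no peak. -/
noncomputable def noPeakProb (x : ℕ) : ℝ :=
  2 ^ (x - 2) / (x - 1)!

theorem noPeakProb_pos (x : ℕ) : 0 < noPeakProb x := by
  unfold noPeakProb
  positivity

theorem noPeakProb_two : noPeakProb 2 = 1 := by
  simp [noPeakProb]

theorem mul_noPeakProb_add_one (hx : 2 ≤ x) : x * noPeakProb (x + 1) = 2 * noPeakProb x := by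
  obtain ⟨k, rfl⟩ := Nat.exists_eq_add_of_le' hx
  simp only [noPeakProb, Nat.add_sub_cancel, show k + 2 + 1 - 2 = k + 1 by lia,
    show k + 2 - 1 = k + 1 by lia, Nat.factorial_succ (k + 1)]
  push_cast
  field_simp
  ring

theorem noPeakProb_le_sub_one_mul (hx : 2 ≤ x) :
    noPeakProb x ≤ (x - 1) * noPeakProb (x + 1) := by
  have hx' : (2 : ℝ) ≤ x := mod_cast hx
  nlinarith [mul_noPeakProb_add_one hx, noPeakProb_pos (x + 1)]

theorem two_thirds_le_of_cube_eq (hr : r ^ 3 = 1 / 3) : 2 / 3 ≤ r := by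
  have : (2 / 3 : ℝ) ^ 3 ≤ r ^ 3 := by norm_num [hr]
  exact (Odd.strictMono_pow (by decide)).le_iff_le.mp this

theorem noPeakProb_le_three_mul_pow (hr : r ^ 3 = 1 / 3) (hx : 2 ≤ x) :
    noPeakProb x ≤ 3 * r ^ x := by
  have hr' := two_thirds_le_of_cube_eq hr
  obtain rfl | hx := hx.eq_or_lt
  · rw [noPeakProb_two]
    nlinarith
  induction x, (show 3 ≤ x from hx) using Nat.le_induction with
  | base => norm_num [noPeakProb, hr]
  | succ x hx₃ ih =>
    have hx' : (3 : ℝ) ≤ x := mod_cast hx₃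
    have hrec := mul_noPeakProb_add_one (x := x) (by lia)
    calc noPeakProb (x + 1)
      _ ≤ 2 / 3 * noPeakProb x := by nlinarith [noPeakProb_pos (x + 1)]
      _ ≤ r * (3 * r ^ x) :=
        mul_le_mul hr' (ih (by lia) (by lia)) (noPeakProb_pos x).le (by positivity)
      _ = 3 * r ^ (x + 1) := by ring

theorem sq_noPeakProb_div_pow_le (hr : r ^ 3 = 1 / 3) (hx : 2 ≤ x) :
    (noPeakProb x / (3 * r ^ x)) ^ 2 ≤ x / 3 := by
  have hr' := two_thirds_le_of_cube_eq hr
  obtain rfl | hx := hx.eq_or_lt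
  · have : 3 / 2 ≤ 9 * r ^ 4 := by nlinarith
    rw [noPeakProb_two, div_pow, div_le_iff₀ (by positivity)]
    push_cast
    nlinarith
  · have hle : noPeakProb x / (3 * r ^ x) ≤ 1 :=
      div_le_one_of_le₀ (noPeakProb_le_three_mul_pow hr hx.le) (by positivity)
    calc (noPeakProb x / (3 * r ^ x)) ^ 2
      _ ≤ 1 := pow_le_one₀ (div_nonneg (noPeakProb_pos x).le (by positivity)) hle
      _ ≤ x / 3 := by
        rw [one_le_div (by norm_num)]
        exact_mod_cast hx

end NoPeakProb

section WindowBound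

variable {S T : Finset ℕ} {a : ℕ → ℝ} {s t f l x : ℕ} {r b C : ℝ}

theorem isLeast_inter_Ioo_iff : IsLeast (S ∩ Ioo s t : Finset ℕ) f ↔
    f ∈ S ∧ f ∈ Ioo s t ∧ ∀ i ∈ Ioo s f, i ∉ S := by
  simp only [IsLeast, mem_coe, mem_inter, mem_lowerBounds]
  grind

theorem isGreatest_inter_Ioo_iff : IsGreatest (S ∩ Ioo s t : Finset ℕ) l ↔
    l ∈ S ∧ l ∈ Ioo s t ∧ ∀ i ∈ Ioo l t, i ∉ S := by
  simp only [IsGreatest, mem_coe, mem_inter, mem_upperBounds]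
  grind

theorem windowProb_le_noPeakProb (hst : s + 2 ≤ t) (hS : ∀ i ∈ Ioo s t, i ∉ S) :
    windowProb S s t ≤ noPeakProb (t - s) := by
  obtain ⟨x, hx⟩ : ∃ x, t = s + x + 2 := ⟨t - s - 2, by lia⟩
  induction x generalizing s t with
  | zero =>
    rw [show t - s = 2 by lia, noPeakProb_two]
    exact windowProb_le_one
  | succ x ih =>
    have hleft : windowProb S (s + 1) t ≤ noPeakProb (x + 2) :=
      (ih (by lia) (fun i hi => hS i (by grind)) (by lia)).trans_eq (congrArg _ (by lia))
    have hright : windowProb S s (t - 1) ≤ noPeakProb (x + 2) :=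
      (ih (by lia) (fun i hi => hS i (by grind)) (by lia)).trans_eq (congrArg _ (by lia))
    have hempty : S ∩ Ioo s t = ∅ := by grind
    have hrec := mul_windowProb_le_sum (S := S) (show s + 2 < t by lia) (hS _ (by grind))
      (hS _ (by grind))
    rw [if_neg (hS _ (by grind)), if_neg (hS _ (by grind)), hempty, sum_empty, zero_add,
      show t - s - 1 = x + 2 by lia] at hrec
    rw [show t - s = x + 2 + 1 by lia]
    refine le_of_mul_le_mul_left ?_ (show (0 : ℝ) < (x + 2 : ℕ) by positivity)
    linarith [mul_noPeakProb_add_one (x := x + 2) (by lia)]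

theorem sq_le_sq_mul_div_three_of_le_noPeakProb (hr : r ^ 3 = 1 / 3) (hx : 2 ≤ x) (hb₀ : 0 ≤ b)
    (hb : b ≤ C * (noPeakProb x / (3 * r ^ x))) : b ^ 2 ≤ C ^ 2 * (x / 3) := by
  calc b ^ 2
    _ ≤ C ^ 2 * (noPeakProb x / (3 * r ^ x)) ^ 2 := by
      rw [← mul_pow]
      exact pow_le_pow_left₀ hb₀ hb 2
    _ ≤ C ^ 2 * (x / 3) := by
      gcongr
      exact sq_noPeakProb_div_pow_le hr hx

theorem sum_sq_le_of_le_noPeakProb_of_isGreatest_lt (hr : r ^ 3 = 1 / 3) (hT : ∀ i ∈ T, i + 1 ∉ T)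
    (hf : IsLeast (T : Set ℕ) f) (hl : IsGreatest (T : Set ℕ) l) (ha₀ : ∀ i, 0 ≤ a i)
    (haf : a f ≤ C) (ha : ∀ i ∈ T, ∀ p, IsGreatest {j | j ∈ T ∧ j < i} p →
      a i ≤ C * (noPeakProb (i - p) / (3 * r ^ (i - p)))) :
    ∑ i ∈ T, a i ^ 2 ≤ C ^ 2 * ((l - f + 3) / 3) := by
  have hstep (i : ℕ) (hi : i ∈ T) (p : ℕ) (hp : IsGreatest {j | j ∈ T ∧ j < i} p) :
      a i ^ 2 ≤ C ^ 2 * (i / 3) - C ^ 2 * (p / 3) := by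
    have hpi : p + 2 ≤ i := by grind [hp.1]
    refine (sq_le_sq_mul_div_three_of_le_noPeakProb hr (by lia) (ha₀ i) (ha i hi p hp)).trans_eq ?_
    rw [Nat.cast_sub (by lia)]
    ring
  linarith [sum_le_add_sub_of_isGreatest_lt (g := fun i : ℕ => C ^ 2 * (i / 3)) hf hl hstep,
    pow_le_pow_left₀ (ha₀ f) haf 2]

theorem sum_sq_le_of_le_noPeakProb_of_isLeast_gt (hr : r ^ 3 = 1 / 3) (hT : ∀ i ∈ T, i + 1 ∉ T)
    (hf : IsLeast (T : Set ℕ) f) (hl : IsGreatest (T : Set ℕ) l) (ha₀ : ∀ i, 0 ≤ a i)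
    (hal : a l ≤ C) (ha : ∀ i ∈ T, ∀ p, IsLeast {j | j ∈ T ∧ i < j} p →
      a i ≤ C * (noPeakProb (p - i) / (3 * r ^ (p - i)))) :
    ∑ i ∈ T, a i ^ 2 ≤ C ^ 2 * ((l - f + 3) / 3) := by
  have hstep (i : ℕ) (hi : i ∈ T) (p : ℕ) (hp : IsLeast {j | j ∈ T ∧ i < j} p) :
      a i ^ 2 ≤ C ^ 2 * (p / 3) - C ^ 2 * (i / 3) := by
    have hip : i + 2 ≤ p := by grind [hp.1]
    refine (sq_le_sq_mul_div_three_of_le_noPeakProb hr (by lia) (ha₀ i) (ha i hi p hp)).trans_eq ?_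
    rw [Nat.cast_sub (by lia)]
    ring
  linarith [sum_le_add_sub_of_isLeast_gt (g := fun i : ℕ => C ^ 2 * (i / 3)) hf hl hstep,
    pow_le_pow_left₀ (ha₀ l) hal 2]

/-- The bound `w (f - s) * w (t - l) * r ^ (l - f) / 3` with `w = noPeakProb` for the probability
`windowProb S s t`, where `f` and `l` are the first and the last element of `S` between `s`
and `t`. -/
noncomputable def windowBound (r : ℝ) (s f l t : ℕ) : ℝ :=
  noPeakProb (f - s) * noPeakProb (t - l) * r ^ (l - f) / 3

/-- The bound `windowBound` holds for the probability `windowProb S s t`, unless `S` has no element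
between `s` and `t` or one next to an end. -/
def HasWindowBound (r : ℝ) (S : Finset ℕ) (s t : ℕ) : Prop :=
  ∀ ⦃f l : ℕ⦄, IsLeast (S ∩ Ioo s t : Finset ℕ) f → IsGreatest (S ∩ Ioo s t : Finset ℕ) l →
    s + 2 ≤ f → l + 2 ≤ t → windowProb S s t ≤ windowBound r s f l t

theorem windowBound_nonneg (hr : 0 ≤ r) : 0 ≤ windowBound r s f l t := by
  have := noPeakProb_pos (f - s)
  have := noPeakProb_pos (t - l)
  unfold windowBound
  positivity

theorem sum_sq_windowProb_div_pow_le (hr : r ^ 3 = 1 / 3) (hS : ∀ i ∈ S, i + 1 ∉ S)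
    (hf : IsLeast (S ∩ Ioo s t : Finset ℕ) f) (hl : IsGreatest (S ∩ Ioo s t : Finset ℕ) l)
    (hsf : s + 2 ≤ f) (ih : ∀ i ∈ Ioo s t, HasWindowBound r S s i) :
    ∑ i ∈ S ∩ Ioo s t, (windowProb S s i / r ^ i) ^ 2 ≤
      (noPeakProb (f - s) / r ^ f) ^ 2 * ((l - f + 3) / 3) := by
  have hr₀ : 0 < r := by linarith [two_thirds_le_of_cube_eq hr]
  refine sum_sq_le_of_le_noPeakProb_of_isGreatest_lt hr (by grind) hf hl
    (fun i => div_nonneg windowProb_nonneg (by positivity)) ?_ fun i hi p hp => ?_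
  · gcongr
    exact windowProb_le_noPeakProb hsf (isLeast_inter_Ioo_iff.mp hf).2.2
  · have hp' : IsGreatest (S ∩ Ioo s i : Finset ℕ) p := by
      convert hp using 1
      grind
    have hf' : IsLeast (S ∩ Ioo s i : Finset ℕ) f := by
      grind [isLeast_inter_Ioo_iff, isGreatest_inter_Ioo_iff]
    have hfp : f ≤ p := hf'.2 hp'.1
    have hpi : p + 2 ≤ i := by grind [hp.1]
    calc windowProb S s i / r ^ i
      _ ≤ windowBound r s f p i / r ^ i := by
        gcongr
        exact ih i (by grind) hf' hp' hsf hpi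
      _ = noPeakProb (f - s) / r ^ f * (noPeakProb (i - p) / (3 * r ^ (i - p))) := by
        obtain ⟨x, rfl⟩ := Nat.exists_eq_add_of_le hfp
        obtain ⟨y, rfl⟩ := Nat.exists_eq_add_of_le (show f + x ≤ i by lia)
        simp only [windowBound, Nat.add_sub_cancel_left]
        field_simp
        ring

theorem sum_sq_windowProb_mul_pow_le (hr : r ^ 3 = 1 / 3) (hS : ∀ i ∈ S, i + 1 ∉ S)
    (hf : IsLeast (S ∩ Ioo s t : Finset ℕ) f) (hl : IsGreatest (S ∩ Ioo s t : Finset ℕ) l)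
    (hlt : l + 2 ≤ t) (ih : ∀ i ∈ Ioo s t, HasWindowBound r S i t) :
    ∑ i ∈ S ∩ Ioo s t, (windowProb S i t * r ^ i) ^ 2 ≤
      (noPeakProb (t - l) * r ^ l) ^ 2 * ((l - f + 3) / 3) := by
  have hr₀ : 0 < r := by linarith [two_thirds_le_of_cube_eq hr]
  refine sum_sq_le_of_le_noPeakProb_of_isLeast_gt hr (by grind) hf hl
    (fun i => mul_nonneg windowProb_nonneg (by positivity)) ?_ fun i hi p hp => ?_
  · gcongr
    exact windowProb_le_noPeakProb hlt (isGreatest_inter_Ioo_iff.mp hl).2.2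
  · have hp' : IsLeast (S ∩ Ioo i t : Finset ℕ) p := by
      convert hp using 1
      grind
    have hl' : IsGreatest (S ∩ Ioo i t : Finset ℕ) l := by
      grind [isLeast_inter_Ioo_iff, isGreatest_inter_Ioo_iff]
    have hpl : p ≤ l := hl'.2 hp'.1
    have hip : i + 2 ≤ p := by grind [hp.1]
    calc windowProb S i t * r ^ i
      _ ≤ windowBound r i p l t * r ^ i := by
        gcongr
        exact ih i (by grind) hp' hl' hip hlt
      _ = noPeakProb (t - l) * r ^ l * (noPeakProb (p - i) / (3 * r ^ (p - i))) := by
        obtain ⟨x, rfl⟩ := Nat.exists_eq_add_of_le (show i ≤ p by lia)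
        obtain ⟨y, rfl⟩ := Nat.exists_eq_add_of_le hpl
        simp only [windowBound, Nat.add_sub_cancel_left]
        field_simp
        ring

theorem sum_windowProb_mul_windowProb_le (hr : r ^ 3 = 1 / 3) (hS : ∀ i ∈ S, i + 1 ∉ S)
    (hf : IsLeast (S ∩ Ioo s t : Finset ℕ) f) (hl : IsGreatest (S ∩ Ioo s t : Finset ℕ) l)
    (hsf : s + 2 ≤ f) (hlt : l + 2 ≤ t) (ihs : ∀ i ∈ Ioo s t, HasWindowBound r S s i)
    (iht : ∀ i ∈ Ioo s t, HasWindowBound r S i t) :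
    ∑ i ∈ S ∩ Ioo s t, windowProb S s i * windowProb S i t ≤
      (l - f + 3) * windowBound r s f l t := by
  have hr₀ : 0 < r := by linarith [two_thirds_le_of_cube_eq hr]
  have hfl : f ≤ l := hf.2 hl.1
  have hfl' : (f : ℝ) ≤ l := mod_cast hfl
  refine le_of_sq_le_sq ?_ (mul_nonneg (by linarith) (windowBound_nonneg hr₀.le))
  calc (∑ i ∈ S ∩ Ioo s t, windowProb S s i * windowProb S i t) ^ 2
    _ = (∑ i ∈ S ∩ Ioo s t, windowProb S s i / r ^ i * (windowProb S i t * r ^ i)) ^ 2 := by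
      congr! 2 with i
      field_simp
    _ ≤ (∑ i ∈ S ∩ Ioo s t, (windowProb S s i / r ^ i) ^ 2) *
          ∑ i ∈ S ∩ Ioo s t, (windowProb S i t * r ^ i) ^ 2 := sum_mul_sq_le_sq_mul_sq _ _ _
    _ ≤ (noPeakProb (f - s) / r ^ f) ^ 2 * ((l - f + 3) / 3) *
          ((noPeakProb (t - l) * r ^ l) ^ 2 * ((l - f + 3) / 3)) :=
      mul_le_mul (sum_sq_windowProb_div_pow_le hr hS hf hl hsf ihs)
        (sum_sq_windowProb_mul_pow_le hr hS hf hl hlt iht) (sum_nonneg fun _ _ => sq_nonneg _)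
        (mul_nonneg (sq_nonneg _) (by linarith))
    _ = ((l - f + 3) * windowBound r s f l t) ^ 2 := by
      rw [windowBound, pow_sub₀ r hr₀.ne' hfl]
      ring

theorem ite_windowProb_add_one_le (hr : 0 ≤ r) (hs : s + 1 ∉ S)
    (hf : IsLeast (S ∩ Ioo s t : Finset ℕ) f) (hl : IsGreatest (S ∩ Ioo s t : Finset ℕ) l)
    (hsf : s + 2 ≤ f) (hlt : l + 2 ≤ t) (ih : HasWindowBound r S (s + 1) t) :
    (if s + 2 ∈ S then 0 else windowProb S (s + 1) t) ≤
      (f - s - 2) * windowBound r s f l t := by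
  have hsf' : (s + 2 : ℝ) ≤ f := mod_cast hsf
  split_ifs with hs₂
  · exact mul_nonneg (by linarith) (windowBound_nonneg hr)
  have hwindow : S ∩ Ioo (s + 1) t = S ∩ Ioo s t := by grind
  have hsf₃ : s + 3 ≤ f := by grind [isLeast_inter_Ioo_iff, isGreatest_inter_Ioo_iff]
  refine (ih (hwindow ▸ hf) (hwindow ▸ hl) hsf₃ hlt).trans ?_
  have hw := noPeakProb_le_sub_one_mul (x := f - (s + 1)) (by lia)
  have := noPeakProb_pos (t - l)
  rw [show f - (s + 1) + 1 = f - s by lia, Nat.cast_sub (by lia)] at hw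
  calc windowBound r (s + 1) f l t
    _ ≤ ((f - (s + 1 : ℕ) - 1) * noPeakProb (f - s)) * noPeakProb (t - l) * r ^ (l - f) / 3 := by
      unfold windowBound
      gcongr
    _ = (f - s - 2) * windowBound r s f l t := by
      rw [windowBound]
      push_cast
      ring

theorem ite_windowProb_sub_one_le (hr : 0 ≤ r) (ht : t - 1 ∉ S)
    (hf : IsLeast (S ∩ Ioo s t : Finset ℕ) f) (hl : IsGreatest (S ∩ Ioo s t : Finset ℕ) l)
    (hsf : s + 2 ≤ f) (hlt : l + 2 ≤ t) (ih : HasWindowBound r S s (t - 1)) :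
    (if t - 2 ∈ S then 0 else windowProb S s (t - 1)) ≤
      (t - l - 2) * windowBound r s f l t := by
  have hlt' : (l + 2 : ℝ) ≤ t := mod_cast hlt
  split_ifs with ht₂
  · exact mul_nonneg (by linarith) (windowBound_nonneg hr)
  have hwindow : S ∩ Ioo s (t - 1) = S ∩ Ioo s t := by grind
  have hlt₃ : l + 3 ≤ t := by grind [isLeast_inter_Ioo_iff, isGreatest_inter_Ioo_iff]
  refine (ih (hwindow ▸ hf) (hwindow ▸ hl) hsf (by lia)).trans ?_
  have hw := noPeakProb_le_sub_one_mul (x := t - 1 - l) (by lia)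
  have := noPeakProb_pos (f - s)
  rw [show t - 1 - l + 1 = t - l by lia, Nat.sub_sub, Nat.cast_sub (by lia)] at hw
  calc windowBound r s f l (t - 1)
    _ ≤ noPeakProb (f - s) * ((t - (1 + l : ℕ) - 1) * noPeakProb (t - l)) * r ^ (l - f) / 3 := by
      rw [windowBound, Nat.sub_sub]
      gcongr
    _ = (t - l - 2) * windowBound r s f l t := by
      rw [windowBound]
      push_cast
      ring

theorem hasWindowBound (hr : r ^ 3 = 1 / 3) (hS : ∀ i ∈ S, i + 1 ∉ S) (s t : ℕ) :
    HasWindowBound r S s t := by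
  induction hd : t - s using Nat.strong_induction_on generalizing s t with
  | h d ih =>
    intro f l hf hl hsf hlt
    have hr₀ : 0 ≤ r := by linarith [two_thirds_le_of_cube_eq hr]
    have hfl : f ≤ l := hf.2 hl.1
    have hs : s + 1 ∉ S := fun hs => by grind [isLeast_inter_Ioo_iff, isGreatest_inter_Ioo_iff]
    have ht : t - 1 ∉ S := fun ht => by grind [isLeast_inter_Ioo_iff, isGreatest_inter_Ioo_iff]
    have hsum := sum_windowProb_mul_windowProb_le hr hS hf hl hsf hlt
      (fun i hi => ih _ (by grind) s i rfl) (fun i hi => ih _ (by grind) i t rfl)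
    have hleft := ite_windowProb_add_one_le hr₀ hs hf hl hsf hlt (ih _ (by lia) (s + 1) t rfl)
    have hright := ite_windowProb_sub_one_le hr₀ ht hf hl hsf hlt (ih _ (by lia) s (t - 1) rfl)
    have hrec := mul_windowProb_le_sum (show s + 2 < t by lia) hs ht
    have hgap : (0 : ℝ) < (t - s - 1 : ℕ) := by
      rw [Nat.cast_pos]
      lia
    refine le_of_mul_le_mul_left (hrec.trans ?_) hgap
    rw [Nat.sub_sub, Nat.cast_sub (by lia)]
    push_cast
    linarith

end WindowBound

section UpperBound

variable {S : Finset ℕ} {n s t : ℕ} {r : ℝ}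

theorem windowProb_le_three_mul_pow (hr : r ^ 3 = 1 / 3) (hS : ∀ i ∈ S, i + 1 ∉ S)
    (hst : s + 2 ≤ t) (hs : s + 1 ∉ S) (ht : t - 1 ∉ S) :
    windowProb S s t ≤ 3 * r ^ (t - s) := by
  have hr₀ : 0 < r := by linarith [two_thirds_le_of_cube_eq hr]
  obtain hempty | hne := (S ∩ Ioo s t).eq_empty_or_nonempty
  · have hempty (i : ℕ) (hi : i ∈ Ioo s t) : i ∉ S := fun hiS =>
      notMem_empty i (hempty ▸ mem_inter.mpr ⟨hiS, hi⟩)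
    exact (windowProb_le_noPeakProb hst hempty).trans (noPeakProb_le_three_mul_pow hr (by lia))
  obtain ⟨f, hf⟩ : ∃ f, IsLeast (S ∩ Ioo s t : Finset ℕ) f := ⟨min' _ hne, isLeast_min' _ hne⟩
  obtain ⟨l, hl⟩ : ∃ l, IsGreatest (S ∩ Ioo s t : Finset ℕ) l := ⟨max' _ hne, isGreatest_max' _ hne⟩
  have hsf : s + 2 ≤ f := by grind [isLeast_inter_Ioo_iff]
  have hlt : l + 2 ≤ t := by grind [isGreatest_inter_Ioo_iff]
  have hfl : f ≤ l := hf.2 hl.1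
  calc windowProb S s t
    _ ≤ windowBound r s f l t := hasWindowBound hr hS s t hf hl hsf hlt
    _ ≤ (3 * r ^ (f - s)) * (3 * r ^ (t - l)) * r ^ (l - f) / 3 := by
      have := noPeakProb_pos (t - l)
      unfold windowBound
      gcongr <;> exact noPeakProb_le_three_mul_pow hr (by lia)
    _ = 3 * r ^ (t - s) := by
      rw [show t - s = f - s + (t - l) + (l - f) by lia]
      ring

theorem numPeakSet_le_three_mul_pow_mul_factorial (hr : r ^ 3 = 1 / 3) (hn : 1 ≤ n)
    (S : Finset ℕ) : numPeakSet n S ≤ 3 * r ^ (n + 1) * n ! := by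
  have hr₀ : 0 < r := by linarith [two_thirds_le_of_cube_eq hr]
  by_cases hσ : ∃ σ : Equiv.Perm (Fin n), peakSet σ = S
  · obtain ⟨σ, rfl⟩ := hσ
    have hwindow := peakSet_subset_Ioo (σ := σ)
    have hle := windowProb_le_three_mul_pow (s := 0) (t := n + 1) hr
      (fun i hi hi' => (mem_peakSet.mp hi).not_isPeak_add_one (mem_peakSet.mp hi')) (by lia)
      (fun h => by simpa using hwindow h) (fun h => by simpa using hwindow h)
    rwa [windowProb, show n + 1 - 0 - 1 = n by lia, windowPeaks_zero_eq_self hwindow,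
      div_le_iff₀ (by positivity)] at hle
  · have hzero : numPeakSet n S = 0 := by
      rw [numPeakSet_eq_card, card_eq_zero, filter_eq_empty_iff]
      exact fun σ _ h => hσ ⟨σ, h⟩
    rw [hzero, Nat.cast_zero]
    positivity

theorem three_pow_mul_numPeakSet_le_factorial (ℓ : ℕ) (S : Finset ℕ) :
    3 ^ ℓ * numPeakSet (3 * ℓ + 2) S ≤ (3 * ℓ + 2)! := by
  obtain ⟨r, hr⟩ : ∃ r : ℝ, r ^ 3 = 1 / 3 :=
    ⟨_, Real.rpow_inv_natCast_pow (by norm_num) three_ne_zero⟩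
  have hle := numPeakSet_le_three_mul_pow_mul_factorial (n := 3 * ℓ + 2) hr (by lia) S
  rw [show 3 * ℓ + 2 + 1 = 3 * (ℓ + 1) by lia, pow_mul, hr] at hle
  have : (3 ^ ℓ * numPeakSet (3 * ℓ + 2) S : ℝ) ≤ (3 * ℓ + 2)! := by
    calc (3 ^ ℓ * numPeakSet (3 * ℓ + 2) S : ℝ)
      _ ≤ 3 ^ ℓ * (3 * (1 / 3) ^ (ℓ + 1) * (3 * ℓ + 2)!) := by gcongr
      _ = (3 * ℓ + 2)! := by
        rw [pow_succ, one_div, inv_pow]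
        field_simp
  exact_mod_cast this

end UpperBound

section LowerBound

variable {n s : ℕ} {T : Finset ℕ}

theorem add_two_mem_peakSet_iff (h : s + 3 ≤ n) (σ : Equiv.Perm (Fin n)) :
    s + 2 ∈ peakSet σ ↔ 2 ∈ peakSet (patternAlong (windowEmb h) σ) := by
  simp [peakSet_patternAlong_windowEmb, windowPeaks]

theorem card_filter_two_mem_peakSet : #{π : Equiv.Perm (Fin 3) | 2 ∈ peakSet π} = 2 := by
  have two_mem_iff (π : Equiv.Perm (Fin 3)) : 2 ∈ peakSet π ↔ π 0 < π 1 ∧ π 2 < π 1 := by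
    simp [mem_peakSet, IsPeak]
  simp only [two_mem_iff]
  decide

theorem isRearrangementStable_filter_subset_peakSet (h : s + 3 ≤ n)
    (hT : ∀ j ∈ T, j < s ∨ s + 5 ≤ j) :
    IsRearrangementStable (windowEmb h) {σ : Equiv.Perm (Fin n) | T ⊆ peakSet σ} := by
  intro σ hσ τ
  rw [mem_filter_univ] at hσ ⊢
  intro j hj
  obtain ⟨hj₂, hjn⟩ := mem_Ioo.mp (peakSet_subset_Ioo (hσ hj))
  obtain ⟨k, rfl⟩ := Nat.exists_eq_add_of_le' (show 2 ≤ j by lia)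
  have hdisj : Disjoint (Set.range (windowEmb h))
      (Set.range (windowEmb (s := k) (a := 3) hjn)) := by
    rw [Set.disjoint_left]
    intro i hi
    have := hT _ hj
    rw [mem_range_windowEmb] at hi ⊢
    lia
  rw [add_two_mem_peakSet_iff hjn, patternAlong_mul_viaFintypeEmbedding_of_disjoint hdisj,
    ← add_two_mem_peakSet_iff]
  exact hσ hj

theorem three_pow_card_mul_card_filter_subset_peakSet (hTn : T ⊆ Ioo 1 n)
    (hT : ∀ i ∈ T, ∀ j ∈ T, i < j → i + 3 ≤ j) :
    3 ^ #T * #{σ : Equiv.Perm (Fin n) | T ⊆ peakSet σ} = n ! := by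
  induction T using Finset.induction_on with
  | empty => simp [Fintype.card_perm]
  | insert i T hi ih =>
    obtain ⟨hi₂, hin⟩ := mem_Ioo.mp (hTn (mem_insert_self i T))
    obtain ⟨s, rfl⟩ := Nat.exists_eq_add_of_le' (show 2 ≤ i by lia)
    have hfar : ∀ j ∈ T, j < s ∨ s + 5 ≤ j := by grind
    have hcount := (isRearrangementStable_filter_subset_peakSet hin hfar
      ).card_filter_patternAlong_mul_factorial (2 ∈ peakSet ·)
    rw [card_filter_two_mem_peakSet, filter_filter] at hcount
    simp only [← add_two_mem_peakSet_iff] at hcount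
    have hthree : 3 * #{σ : Equiv.Perm (Fin n) | insert (s + 2) T ⊆ peakSet σ} =
        #{σ : Equiv.Perm (Fin n) | T ⊆ peakSet σ} := by
      simp only [insert_subset_iff, and_comm (a := s + 2 ∈ _)]
      norm_num [Nat.factorial] at hcount
      lia
    rw [← ih (by grind) (by grind), card_insert_of_notMem hi, pow_succ, mul_assoc, hthree]

theorem peakSet_eq_of_filter_three_dvd_subset {ℓ : ℕ} {σ : Equiv.Perm (Fin (3 * ℓ + 2))}
    (hσ : {i ∈ Ioc 0 (3 * ℓ) | 3 ∣ i} ⊆ peakSet σ) :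
    peakSet σ = {i ∈ Ioc 0 (3 * ℓ) | 3 ∣ i} := by
  refine Subset.antisymm (fun i hi => ?_) hσ
  have isPeak_of_dvd (j : ℕ) (hj : 0 < j ∧ j ≤ 3 * ℓ ∧ 3 ∣ j) : IsPeak σ j :=
    mem_peakSet.mp (hσ (by simpa [and_assoc] using hj))
  obtain ⟨hi₁, hin⟩ := mem_Ioo.mp (peakSet_subset_Ioo hi)
  have hpeak := mem_peakSet.mp hi
  have hpred : ¬ IsPeak σ (i - 1) := fun h => by
    have := h.not_isPeak_add_one
    rw [Nat.sub_add_cancel hi₁.le] at this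
    exact this hpeak
  have := mt (isPeak_of_dvd _) hpeak.not_isPeak_add_one
  have := mt (isPeak_of_dvd _) hpred
  simp only [mem_filter, mem_Ioc]
  lia

theorem three_pow_mul_numPeakSet_filter_three_dvd (ℓ : ℕ) :
    3 ^ ℓ * numPeakSet (3 * ℓ + 2) {i ∈ Ioc 0 (3 * ℓ) | 3 ∣ i} = (3 * ℓ + 2)! := by
  have hcount := three_pow_card_mul_card_filter_subset_peakSet (n := 3 * ℓ + 2)
    (T := {i ∈ Ioc 0 (3 * ℓ) | 3 ∣ i}) (by grind) (by grind)
  rw [Nat.Ioc_filter_dvd_card_eq_div, Nat.mul_div_cancel_left _ three_pos] at hcount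
  rw [← hcount, numPeakSet_eq_card]
  congr 2
  ext σ
  simp only [mem_filter_univ]
  exact ⟨fun h => h.ge, peakSet_eq_of_filter_three_dvd_subset⟩

end LowerBound

theorem max_peak_set_count_mod_two (ℓ n : ℕ) (hℓ : 2 ≤ ℓ) (hn : n = 3 * ℓ + 2) :
    3 ^ ℓ *
      ((Finset.Icc 1 n).powerset.sup fun S => numPeakSet n S) = Nat.factorial n := by
  subst hn
  apply le_antisymm
  · obtain ⟨S, -, hS⟩ := exists_mem_eq_sup _ (powerset_nonempty (Icc 1 (3 * ℓ + 2)))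
      fun S => numPeakSet (3 * ℓ + 2) S
    rw [hS]
    exact three_pow_mul_numPeakSet_le_factorial ℓ S
  · rw [← three_pow_mul_numPeakSet_filter_three_dvd]
    gcongr
    refine le_sup (f := fun S => numPeakSet (3 * ℓ + 2) S) (mem_powerset.mpr fun i hi => ?_)
    grind
end

section
/- Let c be a maximal composition with at least 3 parts. Then c can be written as c = x_0 ⊕ (3) ⊕ x_1 ⊕ (3) ⊕ ⋯ ⊕ (3) ⊕ x_k for some k ≥ 1 and compositions x_0, x_1, …, x_k (possibly empty) such that x_0 ∈ {ε, (4)}, x_k is either ε or of the form (2^s) with s ≥ 1, and for each i with 1 ≤ i ≤ k−1, x_i is either ε, of the form (2^s) with s ≥ 1, or of the form (4^t) with t ≥ 1. -/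
/-- `chain3 c k = c 0 ⊕ (3) ⊕ c 1 ⊕ (3) ⊕ ⋯ ⊕ (3) ⊕ c k`. -/
def chain3 (c : ℕ → List ℕ) : ℕ → List ℕ
  | 0 => c 0
  | k + 1 => chain3 c k ++ [3] ++ c (k + 1)

/-!
`P(c) / n!` is the probability that `n` independent uniform variables on `[0, 1]` have their peaks
at `S(c)`. Following the density of the last variable from one peak to the next, a part `m` acts as
the kernel `((x + y)^(m-1) - |x - y|^(m-1)) / (2 (m-1)!)`. Appending one more variable equal to `1`
turns the end of the sequence into a peak, so `P(c) / n!` is the value at `(1, 1)` of the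
composition of the kernels of the parts of `c`, the last part being raised by one. This value is
invariant under reversal.

The kernels are positive, so replacing a word of parts by another one with the same sum and a
pointwise larger kernel raises the value. The kernel of `m` is smaller than that of `2, m - 2` if
`m ≥ 5`, and those of `2, 4` and `4, 2` are smaller than that of `3, 3`; at the ends of the list,
where `x = 1`, one also has `2, 2 < 4`, `2, 3 < 3, 2`, `3, 4 < 4, 3` and `4, 4 < 3, 2, 3`. Hence the
parts are at most `4`, the maximal blocks without `3` are constant, and reversal yields the
restrictions at both ends.
-/

section Calculus

open intervalIntegral Set

theorem hasDerivAt_max_zero_pow (p : ℕ) (t : ℝ) :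
    HasDerivAt (fun s : ℝ ↦ max s 0 ^ (p + 2)) ((p + 2) * max t 0 ^ (p + 1)) t := by
  rcases lt_trichotomy t 0 with ht | rfl | ht
  · refine ((hasDerivAt_const t (0 : ℝ)).congr_of_eventuallyEq ?_).congr_deriv ?_
    · filter_upwards [eventually_lt_nhds ht] with s hs
      simp [max_eq_right hs.le]
    · simp [max_eq_right ht.le]
  · rw [hasDerivAt_iff_isLittleO]
    have hpow : (fun s : ℝ ↦ s ^ (p + 2)) =o[nhds 0] fun s ↦ s := by
      simpa using Asymptotics.isLittleO_pow_pow (𝕜 := ℝ) (m := 1) (n := p + 2) (by omega)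
    refine ((Asymptotics.isBigO_of_le _ fun s ↦ ?_).trans_isLittleO hpow).congr_right (by simp)
    have hle : max s 0 ≤ |s| := max_le (le_abs_self s) (abs_nonneg s)
    simpa [abs_of_nonneg (le_max_right s 0)] using pow_le_pow_left₀ (le_max_right s 0) hle (p + 2)
  · refine ((hasDerivAt_pow (p + 2) t).congr_of_eventuallyEq ?_).congr_deriv ?_
    · filter_upwards [eventually_gt_nhds ht] with s hs
      rw [max_eq_left hs.le]
    · simp [max_eq_left ht.le]

theorem integral_lt_integral_of_lt_on_Ioo {a b : ℝ} {f g : ℝ → ℝ} (hab : a < b)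
    (hf : IntervalIntegrable f MeasureTheory.volume a b)
    (hg : IntervalIntegrable g MeasureTheory.volume a b) (hlt : ∀ z ∈ Ioo a b, f z < g z) :
    ∫ z in a..b, f z < ∫ z in a..b, g z := by
  rw [← sub_pos, ← integral_sub hg hf]
  exact intervalIntegral_pos_of_pos_on (hg.sub hf) (fun z hz ↦ sub_pos.2 (hlt z hz)) hab

theorem integral_integral_swap_of_continuous {f : ℝ → ℝ → ℝ}
    (hf : Continuous (Function.uncurry f)) (a b c d : ℝ) :
    ∫ x in a..b, ∫ y in c..d, f x y = ∫ y in c..d, ∫ x in a..b, f x y :=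
  MeasureTheory.intervalIntegral_intervalIntegral_swap <|
    (hf.continuousOn.integrableOn_compact (isCompact_uIcc.prod isCompact_uIcc)).mono_set
      (prod_mono uIoc_subset_uIcc uIoc_subset_uIcc)

/-- `min x z` is the Green function of `-d²/dz²` on the functions that vanish at `0` and
have vanishing derivative at `1`. -/
theorem integral_min_mul_eq {F G g : ℝ → ℝ} (hF : Continuous F) (hg : ∀ z, HasDerivAt g (G z) z)
    (hG : ∀ z, HasDerivAt G (F z) z) {x : ℝ} (hx : x ∈ Icc (0 : ℝ) 1) :
    ∫ z in (0 : ℝ)..1, min x z * F z = x * G 1 - g x + g 0 := by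
  have hmin : Continuous fun z ↦ min x z * F z := by fun_prop
  have left : ∫ z in (0 : ℝ)..x, min x z * F z = x * G x - g x + g 0 := by
    have hderiv (z : ℝ) : HasDerivAt (fun z ↦ z * G z - g z) (z * F z) z :=
      (((hasDerivAt_id z).mul (hG z)).sub (hg z)).congr_deriv (by simp)
    rw [integral_congr (g := fun z ↦ z * F z), integral_eq_sub_of_hasDerivAt (fun z _ ↦ hderiv z)
      ((by fun_prop : Continuous fun z ↦ z * F z).intervalIntegrable _ _)]
    · ring
    · intro z hz
      rw [uIcc_of_le hx.1] at hz
      simp only [min_eq_right hz.2]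
  have right : ∫ z in x..1, min x z * F z = x * G 1 - x * G x := by
    rw [integral_congr (g := fun z ↦ x * F z),
      integral_eq_sub_of_hasDerivAt (fun z _ ↦ (hG z).const_mul x)
      ((by fun_prop : Continuous fun z ↦ x * F z).intervalIntegrable _ _)]
    intro z hz
    rw [uIcc_of_le hx.2] at hz
    simp only [min_eq_left hz.1]
  rw [← integral_add_adjacent_intervals (hmin.intervalIntegrable 0 x) (hmin.intervalIntegrable x 1),
    left, right]
  ring

end Calculus

section PartKernel

/-- The kernel of a part `m`: for `m ≥ 2` and `x`, `y` in `[0, 1]`, the volume of the set of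
sequences of `m - 1` heights in `[0, 1]` that lead from a peak of height `x` through a single valley
to a peak of height `y`. -/
noncomputable def partKernel (m : ℕ) (x y : ℝ) : ℝ :=
  ((x + y) ^ (m - 1) - |x - y| ^ (m - 1)) / (2 * (m - 1).factorial)

/-- The truncated power `(x - y)₊ ^ p / p!`. For `p ≥ 1` it is the volume of the set of descending
chains `x > z₁ > ⋯ > z_p > y`. -/
noncomputable def truncPow (p : ℕ) (x y : ℝ) : ℝ :=
  max (x - y) 0 ^ p / p.factorial

theorem partKernel_symm (m : ℕ) (x y : ℝ) : partKernel m x y = partKernel m y x := by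
  rw [partKernel, partKernel, add_comm, abs_sub_comm]

theorem partKernel_one (x y : ℝ) : partKernel 1 x y = 0 := by
  simp [partKernel]

theorem partKernel_two (x y : ℝ) : partKernel 2 x y = min x y := by
  rcases le_total x y with h | h
  · simp only [partKernel, Nat.add_one_sub_one, pow_one, abs_sub_comm x,
      abs_of_nonneg (sub_nonneg.2 h), Nat.factorial_one, Nat.cast_one, min_eq_left h]
    ring
  · simp [partKernel, h, abs_of_nonneg (sub_nonneg.2 h)]

theorem partKernel_three (x y : ℝ) : partKernel 3 x y = x * y := by
  simp only [partKernel, Nat.add_one_sub_one, sq_abs, Nat.factorial_two, Nat.cast_ofNat]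
  ring

@[fun_prop]
theorem continuous_partKernel (m : ℕ) : Continuous (Function.uncurry (partKernel m)) := by
  unfold partKernel Function.uncurry
  fun_prop

@[fun_prop]
theorem continuous_truncPow (p : ℕ) : Continuous (Function.uncurry (truncPow p)) := by
  unfold truncPow Function.uncurry
  fun_prop

theorem partKernel_pos {m : ℕ} (hm : 2 ≤ m) {x y : ℝ} (hx : 0 < x) (hy : 0 < y) :
    0 < partKernel m x y := by
  have hlt : |x - y| ^ (m - 1) < (x + y) ^ (m - 1) :=
    pow_lt_pow_left₀ (abs_lt.2 ⟨by linarith, by linarith⟩) (abs_nonneg _) (by omega)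
  exact div_pos (sub_pos.2 hlt) (by positivity)

theorem partKernel_eq_truncPow (p : ℕ) (x y : ℝ) :
    partKernel (p + 2) x y = ((x + y) ^ (p + 1) / (p + 1).factorial -
      truncPow (p + 1) x y - truncPow (p + 1) y x) / 2 := by
  have hmax : max (x - y) 0 ^ (p + 1) + max (y - x) 0 ^ (p + 1) = |x - y| ^ (p + 1) := by
    rcases le_total x y with h | h
    · rw [max_eq_right (by linarith), max_eq_left (by linarith), abs_sub_comm,
        abs_of_nonneg (by linarith)]
      simp
    · rw [max_eq_left (by linarith), max_eq_right (by linarith), abs_of_nonneg (by linarith)]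
      simp
  rw [partKernel, show p + 2 - 1 = p + 1 from rfl, ← hmax, truncPow, truncPow]
  field_simp
  ring

theorem hasDerivAt_truncPow_left (p : ℕ) (x y : ℝ) :
    HasDerivAt (fun x ↦ truncPow (p + 2) x y) (truncPow (p + 1) x y) x := by
  have h := ((hasDerivAt_max_zero_pow p (x - y)).comp x ((hasDerivAt_id x).sub_const y)).div_const
    ((p + 2).factorial : ℝ)
  refine h.congr_deriv ?_
  rw [truncPow, Nat.factorial_succ (p + 1)]
  push_cast
  field_simp
  ring

theorem hasDerivAt_truncPow_right (p : ℕ) (x y : ℝ) :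
    HasDerivAt (truncPow (p + 2) x) (-truncPow (p + 1) x y) y := by
  have h := ((hasDerivAt_max_zero_pow p (x - y)).comp y ((hasDerivAt_id y).const_sub x)).div_const
    ((p + 2).factorial : ℝ)
  refine h.congr_deriv ?_
  rw [truncPow, Nat.factorial_succ (p + 1)]
  push_cast
  field_simp
  ring

theorem hasDerivAt_partKernel (p : ℕ) (x y : ℝ) :
    HasDerivAt (partKernel (p + 3) x) (partKernel (p + 2) x y + truncPow (p + 1) x y) y := by
  have hpow : HasDerivAt (fun y ↦ (x + y) ^ (p + 2) / ((p + 2).factorial : ℝ))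
      ((x + y) ^ (p + 1) / (p + 1).factorial) y := by
    refine ((((hasDerivAt_id y).const_add x).pow (p + 2)).div_const _).congr_deriv ?_
    rw [Nat.factorial_succ (p + 1)]
    push_cast
    simp only [id_eq, mul_one]
    field_simp
    ring
  have h := ((hpow.sub (hasDerivAt_truncPow_right p x y)).sub
    (hasDerivAt_truncPow_left p y x)).div_const 2
  rw [funext (partKernel_eq_truncPow (p + 1) x), partKernel_eq_truncPow p]
  exact h.congr_deriv (by ring)

end PartKernel

section WordKernel

open intervalIntegral Set

/-- Composition of kernels on the unit interval. -/
noncomputable def kernelComp (H G : ℝ → ℝ → ℝ) (x y : ℝ) : ℝ :=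
  ∫ z in (0 : ℝ)..1, H x z * G z y

theorem continuous_kernelComp {H G : ℝ → ℝ → ℝ} (hH : Continuous (Function.uncurry H))
    (hG : Continuous (Function.uncurry G)) : Continuous (Function.uncurry (kernelComp H G)) := by
  refine continuous_parametric_intervalIntegral_of_continuous'
    (f := fun (q : ℝ × ℝ) z ↦ H q.1 z * G z q.2) ?_ 0 1
  unfold Function.uncurry
  fun_prop

theorem kernelComp_assoc {F G H : ℝ → ℝ → ℝ} (hF : Continuous (Function.uncurry F))
    (hG : Continuous (Function.uncurry G)) (hH : Continuous (Function.uncurry H)) :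
    kernelComp (kernelComp F G) H = kernelComp F (kernelComp G H) := by
  ext x y
  unfold kernelComp
  simp_rw [← integral_mul_const, ← integral_const_mul]
  rw [integral_integral_swap_of_continuous (by unfold Function.uncurry; fun_prop)]
  simp_rw [mul_assoc]

/-- The kernel of a list of consecutive parts, obtained by composing the kernels of the parts.
The value at `[]`, which should be the identity kernel, is set to `0`. -/
noncomputable def wordKernel : List ℕ → ℝ → ℝ → ℝ
  | [] => 0
  | [m] => partKernel m
  | m :: b :: l => kernelComp (partKernel m) (wordKernel (b :: l))

theorem wordKernel_nil : wordKernel [] = 0 := by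
  rw [wordKernel]

theorem wordKernel_singleton (m : ℕ) : wordKernel [m] = partKernel m := by
  rw [wordKernel]

theorem wordKernel_cons (m : ℕ) {l : List ℕ} (hl : l ≠ []) :
    wordKernel (m :: l) = kernelComp (partKernel m) (wordKernel l) := by
  cases l with
  | nil => exact absurd rfl hl
  | cons b l => rw [wordKernel]

@[fun_prop]
theorem continuous_wordKernel (l : List ℕ) : Continuous (Function.uncurry (wordKernel l)) := by
  induction l with
  | nil =>
    rw [wordKernel_nil]
    exact continuous_const
  | cons m l ih =>
    rcases eq_or_ne l [] with rfl | hl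
    · rw [wordKernel_singleton]
      exact continuous_partKernel m
    · rw [wordKernel_cons m hl]
      exact continuous_kernelComp (continuous_partKernel m) ih

theorem wordKernel_append {u v : List ℕ} (hu : u ≠ []) (hv : v ≠ []) :
    wordKernel (u ++ v) = kernelComp (wordKernel u) (wordKernel v) := by
  induction u with
  | nil => exact absurd rfl hu
  | cons m u ih =>
    rw [List.cons_append, wordKernel_cons m (by simp [hv])]
    rcases eq_or_ne u [] with rfl | hu
    · rw [wordKernel_singleton, List.nil_append]
    · rw [ih hu, wordKernel_cons m hu]
      exact (kernelComp_assoc (continuous_partKernel m) (continuous_wordKernel u)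
        (continuous_wordKernel v)).symm

theorem wordKernel_reverse (l : List ℕ) (x y : ℝ) :
    wordKernel l.reverse x y = wordKernel l y x := by
  induction l generalizing x y with
  | nil => simp [wordKernel_nil]
  | cons m l ih =>
    rcases eq_or_ne l [] with rfl | hl
    · rw [List.reverse_singleton, wordKernel_singleton, partKernel_symm]
    · rw [List.reverse_cons, wordKernel_append (by simpa using hl) (by simp), wordKernel_cons m hl,
        wordKernel_singleton]
      simp only [kernelComp, ih, partKernel_symm m y, mul_comm]

theorem wordKernel_pos {l : List ℕ} (hl : l ≠ []) (h2 : ∀ m ∈ l, 2 ≤ m) {x y : ℝ} (hx : 0 < x)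
    (hy : 0 < y) : 0 < wordKernel l x y := by
  induction l generalizing x with
  | nil => exact absurd rfl hl
  | cons m l ih =>
    rw [List.forall_mem_cons] at h2
    rcases eq_or_ne l [] with rfl | hl
    · rw [wordKernel_singleton]
      exact partKernel_pos h2.1 hx hy
    · rw [wordKernel_cons m hl]
      refine intervalIntegral_pos_of_pos_on
        ((by fun_prop : Continuous _).intervalIntegrable _ _) (fun z hz ↦ ?_) zero_lt_one
      exact mul_pos (partKernel_pos h2.1 hx hz.1) (ih hl h2.2 hz.1)

theorem wordKernel_eq_zero_of_one_mem {l : List ℕ} (hl : 1 ∈ l) (x y : ℝ) :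
    wordKernel l x y = 0 := by
  induction l generalizing x with
  | nil => simp [wordKernel_nil]
  | cons m l ih =>
    rcases eq_or_ne l [] with rfl | hne
    · rw [← List.mem_singleton.1 hl, wordKernel_singleton, partKernel_one]
    · rw [wordKernel_cons m hne, kernelComp]
      rcases List.mem_cons.1 hl with rfl | hmem
      · simp [partKernel_one]
      · simp [ih hmem]

end WordKernel

section ClosedForms

open intervalIntegral Set

variable {x y : ℝ}

theorem wordKernel_two_pair (p : ℕ) (hx : x ∈ Icc (0 : ℝ) 1) (hy : y ∈ Icc (0 : ℝ) 1) :
    wordKernel [2, p + 2] x y = x * partKernel (p + 3) 1 y - partKernel (p + 4) x y := by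
  have hG (z : ℝ) : HasDerivAt (fun z ↦ partKernel (p + 3) y z + truncPow (p + 2) y z)
      (partKernel (p + 2) y z) z :=
    ((hasDerivAt_partKernel p y z).add (hasDerivAt_truncPow_right p y z)).congr_deriv (by ring)
  have green := integral_min_mul_eq (by fun_prop) (hasDerivAt_partKernel (p + 1) y) hG hx
  have htrunc : truncPow (p + 2) y 1 = 0 := by simp [truncPow, hy.2]
  have hzero : partKernel (p + 4) y 0 = 0 := by simp [partKernel, abs_of_nonneg hy.1]
  rw [htrunc, hzero, partKernel_symm (p + 3), partKernel_symm _ y x] at green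
  rw [wordKernel_cons 2 (by simp), wordKernel_singleton, kernelComp]
  simp only [partKernel_two, partKernel_symm (p + 2) _ y]
  linarith

theorem wordKernel_three_cons {l : List ℕ} (hl : l ≠ []) (x y : ℝ) :
    wordKernel (3 :: l) x y = x * wordKernel (2 :: l) 1 y := by
  rw [wordKernel_cons 3 hl, wordKernel_cons 2 hl, kernelComp, kernelComp, ← integral_const_mul]
  refine integral_congr fun z hz ↦ ?_
  rw [uIcc_of_le zero_le_one] at hz
  simp only [partKernel_two, partKernel_three, min_eq_right hz.2, mul_assoc]

theorem wordKernel_three_pair (p : ℕ) (x : ℝ) (hy : y ∈ Icc (0 : ℝ) 1) :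
    wordKernel [3, p + 2] x y = x * (partKernel (p + 3) 1 y - partKernel (p + 4) 1 y) := by
  rw [wordKernel_three_cons (by simp), wordKernel_two_pair p (by simp) hy, one_mul]

theorem wordKernel_concat_three (l : List ℕ) (x y : ℝ) :
    wordKernel (l ++ [3]) x y = y * wordKernel (l ++ [3]) x 1 := by
  rw [← wordKernel_reverse, ← wordKernel_reverse _ 1, List.reverse_append, List.reverse_singleton,
    List.singleton_append]
  rcases eq_or_ne l [] with rfl | hl
  · simp [wordKernel_singleton, partKernel_three]
  · simp [wordKernel_three_cons (List.reverse_ne_nil_iff.2 hl)]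

theorem partKernel_one_left (m : ℕ) (hy : y ≤ 1) :
    partKernel m 1 y = ((1 + y) ^ (m - 1) - (1 - y) ^ (m - 1)) / (2 * (m - 1).factorial) := by
  rw [partKernel, abs_of_nonneg (sub_nonneg.2 hy)]

theorem partKernel_four_one_left (hy : y ≤ 1) : partKernel 4 1 y = y / 2 + y ^ 3 / 6 := by
  rw [partKernel_one_left 4 hy]
  norm_num [Nat.factorial]
  ring

theorem partKernel_five_one_left (hy : y ≤ 1) : partKernel 5 1 y = y / 6 + y ^ 3 / 6 := by
  rw [partKernel_one_left 5 hy]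
  norm_num [Nat.factorial]
  ring

theorem partKernel_six_one_left (hy : y ≤ 1) :
    partKernel 6 1 y = y / 24 + y ^ 3 / 12 + y ^ 5 / 120 := by
  rw [partKernel_one_left 6 hy]
  norm_num [Nat.factorial]
  ring

theorem wordKernel_three_two (x : ℝ) (hy : y ∈ Icc (0 : ℝ) 1) :
    wordKernel [3, 2] x y = x * (y / 2 - y ^ 3 / 6) := by
  rw [wordKernel_three_pair 0 x hy, partKernel_three, partKernel_four_one_left hy.2]
  ring

theorem wordKernel_three_three (x : ℝ) (hy : y ∈ Icc (0 : ℝ) 1) :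
    wordKernel [3, 3] x y = x * (y / 3) := by
  rw [wordKernel_three_pair 1 x hy, partKernel_four_one_left hy.2, partKernel_five_one_left hy.2]
  ring

theorem wordKernel_three_four (x : ℝ) (hy : y ∈ Icc (0 : ℝ) 1) :
    wordKernel [3, 4] x y = x * (y / 8 + y ^ 3 / 12 - y ^ 5 / 120) := by
  rw [wordKernel_three_pair 2 x hy, partKernel_five_one_left hy.2, partKernel_six_one_left hy.2]
  ring

theorem wordKernel_four_three (y : ℝ) : wordKernel [4, 3] 1 y = y / 5 := by
  rw [← List.singleton_append, wordKernel_concat_three, List.singleton_append, ← wordKernel_reverse]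
  norm_num [wordKernel_three_four]
  ring

theorem wordKernel_three_two_three (y : ℝ) : wordKernel [3, 2, 3] 1 y = 2 / 15 * y := by
  have hone : wordKernel [3, 2, 3] 1 1 = ∫ z in (0 : ℝ)..1, (z ^ 2 / 2 - z ^ 4 / 6) := by
    rw [show [3, 2, 3] = [3, 2] ++ [3] from rfl, wordKernel_append (by simp) (by simp),
      wordKernel_singleton]
    refine integral_congr fun z hz ↦ ?_
    rw [uIcc_of_le zero_le_one] at hz
    simp only [wordKernel_three_two 1 hz, partKernel_three]
    ring
  rw [show [3, 2, 3] = [3, 2] ++ [3] from rfl, wordKernel_concat_three, List.cons_append,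
    List.singleton_append, hone, integral_sub (by simp) (by simp)]
  norm_num
  ring

end ClosedForms

section Comparison

open intervalIntegral Set

variable {x y : ℝ}

theorem wordKernel_append_lt_left {w w' v : List ℕ} (hw : w ≠ []) (hw' : w' ≠ []) (hv : v ≠ [])
    (h2 : ∀ m ∈ v, 2 ≤ m) (hlt : ∀ z ∈ Ioo (0 : ℝ) 1, wordKernel w x z < wordKernel w' x z)
    (hy : 0 < y) : wordKernel (w ++ v) x y < wordKernel (w' ++ v) x y := by
  rw [wordKernel_append hw hv, wordKernel_append hw' hv]
  exact integral_lt_integral_of_lt_on_Ioo zero_lt_one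
    ((by fun_prop : Continuous _).intervalIntegrable _ _)
    ((by fun_prop : Continuous _).intervalIntegrable _ _)
    fun z hz ↦ mul_lt_mul_of_pos_right (hlt z hz) (wordKernel_pos hv h2 hz.1 hy)

theorem wordKernel_append_lt_right {w w' u : List ℕ} (hw : w ≠ []) (hw' : w' ≠ []) (hu : u ≠ [])
    (h2 : ∀ m ∈ u, 2 ≤ m) (hlt : ∀ z ∈ Ioo (0 : ℝ) 1, wordKernel w z y < wordKernel w' z y)
    (hx : 0 < x) : wordKernel (u ++ w) x y < wordKernel (u ++ w') x y := by
  simp only [← wordKernel_reverse (u ++ _) y x, List.reverse_append]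
  exact wordKernel_append_lt_left (by simpa) (by simpa) (by simpa) (by simpa)
    (by simpa only [wordKernel_reverse]) hx

/-- The weight of a list of parts `d`: for `d = (d₁, …, d_k)` it is, up to the factor `n!`, the
value `P(d₁, …, d_k - 1)` where `n = d₁ + ⋯ + d_k - 1`. -/
noncomputable def weight (d : List ℕ) : ℝ :=
  wordKernel d 1 1

theorem weight_reverse (d : List ℕ) : weight d.reverse = weight d :=
  wordKernel_reverse d 1 1

/-- The kernel of `w` is smaller than that of `w'` at all pairs of heights in `(0, 1]`, except
possibly at the corner `(1, 1)`. -/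
def KernelLT (w w' : List ℕ) : Prop :=
  ∀ x ∈ Ioc (0 : ℝ) 1, ∀ y ∈ Ioc (0 : ℝ) 1, x < 1 ∨ y < 1 → wordKernel w x y < wordKernel w' x y

theorem KernelLT.reverse {w w' : List ℕ} (h : KernelLT w w') : KernelLT w.reverse w'.reverse :=
  fun x hx y hy hxy ↦ by simpa only [wordKernel_reverse] using h y hy x hx hxy.symm

theorem KernelLT.weight_lt {w w' u v : List ℕ} (h : KernelLT w w') (hw : w ≠ []) (hw' : w' ≠ [])
    (hu : ∀ m ∈ u, 2 ≤ m) (hv : ∀ m ∈ v, 2 ≤ m) (huv : u ≠ [] ∨ v ≠ []) :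
    weight (u ++ w ++ v) < weight (u ++ w' ++ v) := by
  have hone : (1 : ℝ) ∈ Ioc (0 : ℝ) 1 := right_mem_Ioc.2 zero_lt_one
  have hright (x : ℝ) (hx : x ∈ Ioc (0 : ℝ) 1) (hxv : x < 1 ∨ v ≠ []) :
      wordKernel (w ++ v) x 1 < wordKernel (w' ++ v) x 1 := by
    rcases eq_or_ne v [] with rfl | hne
    · simpa using h x hx 1 hone (hxv.imp_right (absurd rfl))
    · exact wordKernel_append_lt_left hw hw' hne hv
        (fun z hz ↦ h x hx z (Ioo_subset_Ioc_self hz) (.inr hz.2)) one_pos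
  simp only [weight, List.append_assoc]
  rcases eq_or_ne u [] with rfl | hne
  · exact hright 1 hone (.inr (huv.resolve_left (absurd rfl)))
  · exact wordKernel_append_lt_right (by simp [hw]) (by simp [hw']) hne hu
      (fun z hz ↦ hright z (Ioo_subset_Ioc_self hz) (.inl hz.2)) one_pos

theorem weight_append_lt {w w' v : List ℕ} (hw : w ≠ []) (hw' : w' ≠ []) (hv : v ≠ [])
    (h2 : ∀ m ∈ v, 2 ≤ m) (hlt : ∀ y ∈ Ioo (0 : ℝ) 1, wordKernel w 1 y < wordKernel w' 1 y) :
    weight (w ++ v) < weight (w' ++ v) :=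
  wordKernel_append_lt_left hw hw' hv h2 hlt one_pos

theorem partKernel_lt_mul_partKernel_one (p : ℕ) (hx : x ∈ Ioo (0 : ℝ) 1)
    (hy : y ∈ Ioc (0 : ℝ) 1) : partKernel (p + 4) x y < x * partKernel (p + 4) 1 y := by
  have hlt : wordKernel [3, p + 2] x y < wordKernel [2, p + 2] x y := by
    refine wordKernel_append_lt_left (w := [3]) (w' := [2]) (by simp) (by simp) (by simp) (by simp)
      (fun z hz ↦ ?_) hy.1
    rw [wordKernel_singleton, wordKernel_singleton, partKernel_two, partKernel_three]
    exact lt_min (mul_lt_of_lt_one_right hx.1 hz.2) (mul_lt_of_lt_one_left hz.1 hx.2)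
  rw [wordKernel_three_pair p x (Ioc_subset_Icc_self hy),
    wordKernel_two_pair p (Ioo_subset_Icc_self hx) (Ioc_subset_Icc_self hy)] at hlt
  linarith

theorem two_mul_partKernel_one_lt (p : ℕ) (hy : y ∈ Ioo (0 : ℝ) 1) :
    2 * partKernel (p + 5) 1 y < partKernel (p + 4) 1 y := by
  set a := (1 + y) ^ (p + 2)
  set b := (1 - y) ^ (p + 2)
  have hb : 0 < b := pow_pos (sub_pos.2 hy.2) _
  have hab : b < a := pow_lt_pow_left₀ (by linarith [hy.1]) (by linarith [hy.2]) (by simp)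
  have hdiff : 0 < (1 + y) * a - (1 - y) * b := by nlinarith [hy.1]
  have hgap : 0 < (1 - y) * (1 + y) * (a - b) :=
    mul_pos (mul_pos (sub_pos.2 hy.2) (by linarith [hy.1])) (sub_pos.2 hab)
  have key : 2 * ((1 + y) ^ 2 * a - (1 - y) ^ 2 * b) < (p + 4) * ((1 + y) * a - (1 - y) * b) := by
    linarith [mul_nonneg p.cast_nonneg hdiff.le]
  calc 2 * partKernel (p + 5) 1 y
      = 2 * ((1 + y) ^ 2 * a - (1 - y) ^ 2 * b) / (2 * ((p + 4) * (p + 3).factorial)) := by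
        rw [partKernel_one_left _ hy.2.le, show p + 5 - 1 = p + 3 + 1 from rfl, Nat.factorial_succ]
        push_cast
        ring
    _ < (p + 4) * ((1 + y) * a - (1 - y) * b) / (2 * ((p + 4) * (p + 3).factorial)) :=
        div_lt_div_of_pos_right key (by positivity)
    _ = partKernel (p + 4) 1 y := by
        rw [partKernel_one_left _ hy.2.le, show p + 4 - 1 = p + 3 from rfl]
        field_simp
        ring

theorem two_mul_partKernel_one_le (p : ℕ) (hy : y ∈ Icc (0 : ℝ) 1) :
    2 * partKernel (p + 5) 1 y ≤ partKernel (p + 4) 1 y := by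
  rw [← closure_Ioo zero_ne_one] at hy
  exact le_on_closure (fun z hz ↦ (two_mul_partKernel_one_lt p hz).le) (by fun_prop) (by fun_prop)
    hy

theorem kernelLT_two_pair_of_five_le (p : ℕ) : KernelLT [p + 5] [2, p + 3] := by
  intro x hx y hy hxy
  rw [wordKernel_singleton, wordKernel_two_pair (p + 1) (Ioc_subset_Icc_self hx)
    (Ioc_subset_Icc_self hy), lt_sub_iff_add_lt, ← two_mul]
  rcases hx.2.lt_or_eq with hx1 | rfl
  · calc 2 * partKernel (p + 5) x y
        < x * (2 * partKernel (p + 5) 1 y) := by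
          linarith [partKernel_lt_mul_partKernel_one (p + 1) ⟨hx.1, hx1⟩ hy]
      _ ≤ x * partKernel (p + 4) 1 y :=
          mul_le_mul_of_nonneg_left (two_mul_partKernel_one_le p (Ioc_subset_Icc_self hy)) hx.1.le
  · rw [one_mul]
    exact two_mul_partKernel_one_lt p ⟨hy.1, hxy.resolve_left (lt_irrefl 1)⟩

theorem kernelLT_two_four : KernelLT [2, 4] [3, 3] := by
  intro x hx y hy _
  have hpos : 0 < partKernel 6 x y := partKernel_pos (by simp) hx.1 hy.1
  have hcube : x * y ^ 3 ≤ x * y :=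
    mul_le_mul_of_nonneg_left (pow_le_of_le_one hy.1.le hy.2 (by simp)) hx.1.le
  rw [wordKernel_two_pair 2 (Ioc_subset_Icc_self hx) (Ioc_subset_Icc_self hy),
    partKernel_five_one_left hy.2, wordKernel_three_three x (Ioc_subset_Icc_self hy)]
  linarith

theorem kernelLT_four_two : KernelLT [4, 2] [3, 3] :=
  kernelLT_two_four.reverse

theorem wordKernel_two_two_lt (hy : y ∈ Ioo (0 : ℝ) 1) :
    wordKernel [2, 2] 1 y < wordKernel [4] 1 y := by
  rw [wordKernel_two_pair 0 (by simp) (Ioo_subset_Icc_self hy), partKernel_three,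
    wordKernel_singleton, partKernel_four_one_left hy.2.le]
  linarith [pow_pos hy.1 3]

theorem wordKernel_two_three_lt (hy : y ∈ Ioo (0 : ℝ) 1) :
    wordKernel [2, 3] 1 y < wordKernel [3, 2] 1 y := by
  rw [wordKernel_two_pair 1 (by simp) (Ioo_subset_Icc_self hy), partKernel_four_one_left hy.2.le,
    partKernel_five_one_left hy.2.le, wordKernel_three_two 1 (Ioo_subset_Icc_self hy)]
  linarith [pow_lt_self_of_lt_one₀ hy.1 hy.2 (by simp : 1 < 3)]

theorem wordKernel_three_four_lt (hy : y ∈ Ioo (0 : ℝ) 1) :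
    wordKernel [3, 4] 1 y < wordKernel [4, 3] 1 y := by
  rw [wordKernel_three_four 1 (Ioo_subset_Icc_self hy), wordKernel_four_three]
  have hsq : y ^ 2 < 1 := pow_lt_one₀ hy.1.le hy.2 (by simp)
  have hpos : 0 < y * (1 - y ^ 2) * (9 - y ^ 2) :=
    mul_pos (mul_pos hy.1 (by linarith)) (by linarith)
  linarith

theorem wordKernel_four_four_lt (hy : y ∈ Ioo (0 : ℝ) 1) :
    wordKernel [4, 4] 1 y < wordKernel [3, 2, 3] 1 y := by
  calc wordKernel [4, 4] 1 y
      < 2 / 3 * wordKernel [3, 4] 1 y := by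
        rw [wordKernel_cons 4 (by simp), wordKernel_cons 3 (by simp), kernelComp, kernelComp,
          ← integral_const_mul]
        refine integral_lt_integral_of_lt_on_Ioo zero_lt_one
          ((by fun_prop : Continuous _).intervalIntegrable _ _)
          ((by fun_prop : Continuous _).intervalIntegrable _ _) fun z hz ↦ ?_
        rw [← mul_assoc, partKernel_four_one_left hz.2.le, partKernel_three]
        refine mul_lt_mul_of_pos_right ?_ (wordKernel_pos (by simp) (by simp) hz.1 hy.1)
        linarith [pow_lt_self_of_lt_one₀ hz.1 hz.2 (by simp : 1 < 3)]
    _ < 2 / 3 * wordKernel [4, 3] 1 y := by linarith [wordKernel_three_four_lt hy]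
    _ = wordKernel [3, 2, 3] 1 y := by
        rw [wordKernel_four_three, wordKernel_three_two_three]
        ring

end Comparison

section Optimal

open Set

/-- `d` has at least three parts, none of them smaller than `2`, and maximal weight among the lists
of such parts with the same sum. -/
structure IsOptimal (d : List ℕ) : Prop where
  two_le : ∀ m ∈ d, 2 ≤ m
  three_le_length : 3 ≤ d.length
  weight_le : ∀ d' : List ℕ, (∀ m ∈ d', 2 ≤ m) → d'.sum = d.sum → weight d' ≤ weight d

namespace IsOptimal

variable {d w w' : List ℕ}

theorem reverse (hd : IsOptimal d) : IsOptimal d.reverse where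
  two_le m hm := hd.two_le m (List.mem_reverse.1 hm)
  three_le_length := by simpa using hd.three_le_length
  weight_le d' h2 hsum := by
    rw [weight_reverse]
    exact hd.weight_le d' h2 (by simpa using hsum)

theorem not_infix_of_kernelLT (hd : IsOptimal d) (hlt : KernelLT w w') (hw : w ≠ [])
    (hw' : w' ≠ []) (h2 : ∀ m ∈ w', 2 ≤ m) (hsum : w'.sum = w.sum) (hlen : w.length ≤ 2) :
    ¬ w <:+: d := by
  rintro ⟨u, v, rfl⟩
  have hparts := hd.two_le
  have hlength := hd.three_le_length
  simp only [List.forall_mem_append] at hparts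
  have huv : u ≠ [] ∨ v ≠ [] := by
    by_contra! h
    simp [h.1, h.2] at hlength
    omega
  refine (hlt.weight_lt hw hw' hparts.1.1 hparts.2 huv).not_ge (hd.weight_le _ ?_ ?_)
  · simpa only [List.forall_mem_append] using ⟨⟨hparts.1.1, h2⟩, hparts.2⟩
  · simp [hsum]

theorem le_four (hd : IsOptimal d) {m : ℕ} (hm : m ∈ d) : m ≤ 4 := by
  by_contra! h
  obtain ⟨p, rfl⟩ := Nat.exists_eq_add_of_le' h
  exact hd.not_infix_of_kernelLT (kernelLT_two_pair_of_five_le p) (by simp) (by simp)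
    (by simp) (by simp; omega) (by simp) ((List.singleton_infix_iff _ _).2 hm)

theorem not_two_four_infix (hd : IsOptimal d) : ¬ [2, 4] <:+: d :=
  hd.not_infix_of_kernelLT kernelLT_two_four (by simp) (by simp) (by simp) (by simp) (by simp)

theorem not_four_two_infix (hd : IsOptimal d) : ¬ [4, 2] <:+: d :=
  hd.not_infix_of_kernelLT kernelLT_four_two (by simp) (by simp) (by simp) (by simp) (by simp)

theorem not_prefix_of_lt (hd : IsOptimal d)
    (hlt : ∀ y ∈ Ioo (0 : ℝ) 1, wordKernel w 1 y < wordKernel w' 1 y) (hw : w ≠ [])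
    (hw' : w' ≠ []) (h2 : ∀ m ∈ w', 2 ≤ m) (hsum : w'.sum = w.sum) (hlen : w.length ≤ 2) :
    ¬ w <+: d := by
  rintro ⟨v, rfl⟩
  have hv : ∀ m ∈ v, 2 ≤ m := (List.forall_mem_append.1 hd.two_le).2
  have hne : v ≠ [] := by
    rintro rfl
    have := hd.three_le_length
    simp at this
    omega
  refine (weight_append_lt hw hw' hne hv hlt).not_ge (hd.weight_le _ ?_ ?_)
  · exact List.forall_mem_append.2 ⟨h2, hv⟩
  · simp [hsum]

theorem not_three_four_prefix (hd : IsOptimal d) : ¬ [3, 4] <+: d :=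
  hd.not_prefix_of_lt (fun _ ↦ wordKernel_three_four_lt) (by simp) (by simp) (by simp) (by simp)
    (by simp)

theorem not_four_four_prefix (hd : IsOptimal d) : ¬ [4, 4] <+: d :=
  hd.not_prefix_of_lt (fun _ ↦ wordKernel_four_four_lt) (by simp) (by simp) (by simp) (by simp)
    (by simp)

theorem not_two_prefix (hd : IsOptimal d) : ¬ [2] <+: d := by
  have h22 : ¬ [2, 2] <+: d :=
    hd.not_prefix_of_lt (fun _ ↦ wordKernel_two_two_lt) (by simp) (by simp) (by simp) (by simp)
      (by simp)
  have h23 : ¬ [2, 3] <+: d :=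
    hd.not_prefix_of_lt (fun _ ↦ wordKernel_two_three_lt) (by simp) (by simp) (by simp) (by simp)
      (by simp)
  have h24 : ¬ [2, 4] <+: d := fun h ↦ hd.not_two_four_infix h.isInfix
  rintro ⟨v, rfl⟩
  obtain _ | ⟨b, v⟩ := v
  · simpa using hd.three_le_length
  · have hb2 : 2 ≤ b := hd.two_le b (by simp)
    have hb4 : b ≤ 4 := hd.le_four (by simp)
    interval_cases b
    exacts [h22 ⟨v, rfl⟩, h23 ⟨v, rfl⟩, h24 ⟨v, rfl⟩]

theorem not_two_suffix (hd : IsOptimal d) : ¬ [2] <:+ d := by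
  simpa [← List.reverse_prefix] using hd.reverse.not_two_prefix

theorem not_four_three_suffix (hd : IsOptimal d) : ¬ [4, 3] <:+ d := by
  simpa [← List.reverse_prefix] using hd.reverse.not_three_four_prefix

end IsOptimal

end Optimal

section Blocks

theorem chain3_congr {x x' : ℕ → List ℕ} {k : ℕ} (h : ∀ i ≤ k, x i = x' i) :
    chain3 x k = chain3 x' k := by
  induction k with
  | zero => exact h 0 le_rfl
  | succ k ih => rw [chain3, chain3, ih fun i hi ↦ h i (by omega), h (k + 1) le_rfl]

theorem chain3_update_last (x : ℕ → List ℕ) (k : ℕ) (l : List ℕ) :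
    chain3 (Function.update x k (x k ++ l)) k = chain3 x k ++ l := by
  cases k with
  | zero => simp [chain3]
  | succ k =>
    have hinit : chain3 (Function.update x (k + 1) (x (k + 1) ++ l)) k = chain3 x k :=
      chain3_congr fun i hi ↦ Function.update_of_ne (by omega) _ _
    simp [chain3, hinit]

theorem prefix_chain3 (x : ℕ → List ℕ) (k : ℕ) : x 0 <+: chain3 x k := by
  induction k with
  | zero => exact List.prefix_rfl
  | succ k ih => exact ih.trans (by simp [chain3])

theorem suffix_chain3 (x : ℕ → List ℕ) (k : ℕ) : x k <:+ chain3 x k := by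
  cases k with
  | zero => exact List.suffix_rfl
  | succ k => exact List.suffix_append _ _

theorem infix_chain3 (x : ℕ → List ℕ) {i k : ℕ} (hi : i ≤ k) : x i <:+: chain3 x k := by
  induction k, hi using Nat.le_induction with
  | base => exact (suffix_chain3 x i).isInfix
  | succ k _ ih => exact ih.trans ⟨[], [3] ++ x (k + 1), by simp [chain3]⟩

theorem exists_chain3_eq (c : List ℕ) : ∃ k x, c = chain3 x k ∧ ∀ i ≤ k, 3 ∉ x i := by
  induction c using List.reverseRecOn with
  | nil => exact ⟨0, fun _ ↦ [], rfl, by simp⟩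
  | append_singleton c a ih =>
    obtain ⟨k, x, rfl, hx⟩ := ih
    by_cases ha : a = 3
    · have hinit : chain3 (Function.update x (k + 1) []) k = chain3 x k :=
        chain3_congr fun i hi ↦ Function.update_of_ne (by omega) _ _
      refine ⟨k + 1, Function.update x (k + 1) [], by simp [chain3, hinit, ha], fun i hi ↦ ?_⟩
      rcases hi.eq_or_lt with rfl | hik
      · simp
      · rw [Function.update_of_ne hik.ne]
        exact hx i (Nat.le_of_lt_succ hik)
    · refine ⟨k, Function.update x k (x k ++ [a]), (chain3_update_last x k [a]).symm, fun i hi ↦ ?_⟩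
      rcases hi.eq_or_lt with rfl | hik
      · simpa [Ne.symm ha] using hx i le_rfl
      · rw [Function.update_of_ne hik.ne]
        exact hx i hi

theorem eq_replicate_two_or_four {l : List ℕ} (hl : ∀ m ∈ l, m = 2 ∨ m = 4)
    (h24 : ¬ [2, 4] <:+: l) (h42 : ¬ [4, 2] <:+: l) :
    (∃ s, l = List.replicate s 2) ∨ ∃ t, l = List.replicate t 4 := by
  induction l with
  | nil => exact .inl ⟨0, rfl⟩
  | cons a l ih =>
    rw [List.forall_mem_cons] at hl
    have htail : l <:+: a :: l := List.infix_cons List.infix_rfl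
    rcases ih hl.2 (fun h ↦ h24 (h.trans htail)) (fun h ↦ h42 (h.trans htail)) with
      ⟨_ | s, rfl⟩ | ⟨_ | s, rfl⟩ <;> rcases hl.1 with rfl | rfl
    · exact .inl ⟨1, rfl⟩
    · exact .inr ⟨1, rfl⟩
    · exact .inl ⟨s + 2, rfl⟩
    · exact absurd ⟨[], List.replicate s 2, rfl⟩ h42
    · exact .inl ⟨1, rfl⟩
    · exact .inr ⟨1, rfl⟩
    · exact absurd ⟨[], List.replicate s 4, rfl⟩ h24
    · exact .inr ⟨s + 2, rfl⟩

/-- The local constraints that force the canonical form. -/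
structure IsReducedWord (c : List ℕ) : Prop where
  two_le : ∀ m ∈ c, 2 ≤ m
  le_four : ∀ m ∈ c, m ≤ 4
  not_two_four_infix : ¬ [2, 4] <:+: c
  not_four_two_infix : ¬ [4, 2] <:+: c
  not_two_prefix : ¬ [2] <+: c
  not_four_four_prefix : ¬ [4, 4] <+: c
  not_four_suffix : ¬ [4] <:+ c

namespace IsReducedWord

variable {c l : List ℕ}

theorem block (hc : IsReducedWord c) (hl : l <:+: c) (h3 : 3 ∉ l) :
    l = [] ∨ (∃ s, 1 ≤ s ∧ l = List.replicate s 2) ∨ ∃ t, 1 ≤ t ∧ l = List.replicate t 4 := by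
  have hparts (m) (hm : m ∈ l) : m = 2 ∨ m = 4 := by
    have hne : m ≠ 3 := ne_of_mem_of_not_mem hm h3
    have := hc.two_le m (hl.subset hm)
    have := hc.le_four m (hl.subset hm)
    omega
  rcases eq_replicate_two_or_four hparts (fun h ↦ hc.not_two_four_infix (h.trans hl))
    (fun h ↦ hc.not_four_two_infix (h.trans hl)) with ⟨_ | s, rfl⟩ | ⟨_ | t, rfl⟩
  · exact .inl rfl
  · exact .inr (.inl ⟨s + 1, Nat.le_add_left 1 s, rfl⟩)
  · exact .inl rfl
  · exact .inr (.inr ⟨t + 1, Nat.le_add_left 1 t, rfl⟩)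

theorem first_block (hc : IsReducedWord c) (hl : l <+: c) (h3 : 3 ∉ l) : l = [] ∨ l = [4] := by
  rcases hc.block hl.isInfix h3 with h | ⟨_ | s, -, rfl⟩ | ⟨_ | _ | t, -, rfl⟩
  · exact .inl h
  · exact .inl rfl
  · exact absurd (List.IsPrefix.trans ⟨_, rfl⟩ hl) hc.not_two_prefix
  · exact .inl rfl
  · exact .inr rfl
  · exact absurd (List.IsPrefix.trans ⟨_, rfl⟩ hl) hc.not_four_four_prefix

theorem last_block (hc : IsReducedWord c) (hl : l <:+ c) (h3 : 3 ∉ l) :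
    l = [] ∨ ∃ s, 1 ≤ s ∧ l = List.replicate s 2 := by
  rcases hc.block hl.isInfix h3 with h | h | ⟨_ | t, -, rfl⟩
  · exact .inl h
  · exact .inr h
  · exact .inl rfl
  · rw [List.replicate_succ'] at hl
    exact absurd ((List.suffix_append _ [4]).trans hl) hc.not_four_suffix

end IsReducedWord

theorem IsOptimal.isReducedWord {u : List ℕ} {l : ℕ} (hd : IsOptimal (u ++ [l + 1])) :
    IsReducedWord (u ++ [l]) := by
  have h2 := hd.two_le
  have h4 (m) (hm : m ∈ u ++ [l + 1]) : m ≤ 4 := hd.le_four hm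
  have hlen := hd.three_le_length
  simp only [List.length_append, List.length_singleton] at hlen
  have hl : l = 2 ∨ l = 3 := by
    have hne : l ≠ 1 := by
      rintro rfl
      exact hd.not_two_suffix (List.suffix_append u [2])
    have := h2 (l + 1) (by simp)
    have := h4 (l + 1) (by simp)
    omega
  have hprefix {w : List ℕ} (hw : w.length ≤ 2) (h : w <+: u ++ [l]) : w <+: u ++ [l + 1] :=
    (List.prefix_of_prefix_length_le h (List.prefix_append u [l]) (by omega)).trans
      (List.prefix_append u _)
  have hu : u <:+: u ++ [l + 1] := (List.prefix_append u _).isInfix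
  refine ⟨?_, ?_, fun h ↦ ?_, fun h ↦ ?_, fun h ↦ hd.not_two_prefix (hprefix (by simp) h),
    fun h ↦ hd.not_four_four_prefix (hprefix (by simp) h), fun h ↦ ?_⟩
  · grind
  · grind
  · rcases List.infix_concat_iff.1 h with h | h
    · have := (by simpa [← List.reverse_prefix] using h : 4 = l ∧ _).1
      omega
    · exact hd.not_two_four_infix (h.trans hu)
  · rcases List.infix_concat_iff.1 h with h | h
    · have hsuffix : 2 = l ∧ [4] <:+ u := by simpa [← List.reverse_prefix] using h
      refine hd.not_four_three_suffix ?_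
      simpa [← hsuffix.1, ← List.reverse_prefix] using hsuffix.2
    · exact hd.not_four_two_infix (h.trans hu)
  · have : 4 = l := by simpa [← List.reverse_prefix] using h
    omega

end Blocks

section OrderDensity

open intervalIntegral Finset

/-- The density at `y` of the value of the last of `n + 1` independent uniform variables on
`[0, 1]`, on the event that their relative order is a given one in which the last variable has
exactly `j` variables below it. -/
noncomputable def orderDensity (n j : ℕ) (y : ℝ) : ℝ :=
  (bernsteinPolynomial ℝ n j).eval y / n.factorial

@[fun_prop]
theorem continuous_orderDensity (n j : ℕ) : Continuous (orderDensity n j) := by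
  unfold orderDensity
  fun_prop

theorem hasDerivAt_sum_orderDensity (n j : ℕ) (y : ℝ) :
    HasDerivAt (fun y ↦ ∑ p ∈ range (j + 1), orderDensity (n + 1) p y) (-orderDensity n j y) y := by
  have hterm (p : ℕ) : HasDerivAt (orderDensity (n + 1) p)
      ((bernsteinPolynomial ℝ (n + 1) p).derivative.eval y / (n + 1).factorial) y :=
    (Polynomial.hasDerivAt _ y).div_const _
  refine (HasDerivAt.fun_sum fun p _ ↦ hterm p).congr_deriv ?_
  have hzero : (bernsteinPolynomial ℝ (n + 1) 0).derivative.eval y / (n + 1).factorial =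
      -orderDensity n 0 y := by
    rw [bernsteinPolynomial.derivative_zero, orderDensity, Nat.factorial_succ]
    simp only [Polynomial.eval_mul, Polynomial.eval_neg, Polynomial.eval_natCast,
      Nat.add_sub_cancel]
    push_cast
    field_simp
  have hsucc (p : ℕ) : (bernsteinPolynomial ℝ (n + 1) (p + 1)).derivative.eval y /
      (n + 1).factorial = orderDensity n p y - orderDensity n (p + 1) y := by
    rw [bernsteinPolynomial.derivative_succ, orderDensity, orderDensity, Nat.factorial_succ]
    simp only [Polynomial.eval_mul, Polynomial.eval_sub, Polynomial.eval_natCast,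
      Nat.add_sub_cancel]
    push_cast
    field_simp
  rw [sum_range_succ', hzero]
  simp_rw [hsucc]
  rw [sum_range_sub' (fun p ↦ orderDensity n p y)]
  ring

theorem integral_orderDensity_right_eq_sum_range {n j : ℕ} (hj : j ≤ n) (y : ℝ) :
    ∫ x in y..1, orderDensity n j x = ∑ p ∈ range (j + 1), orderDensity (n + 1) p y := by
  have hone : ∑ p ∈ range (j + 1), orderDensity (n + 1) p 1 = 0 := by
    refine sum_eq_zero fun p hp ↦ ?_
    have : p ≠ n + 1 := by grind
    simp [orderDensity, bernsteinPolynomial.eval_at_1, this]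
  have h := integral_eq_sub_of_hasDerivAt (fun x _ ↦ hasDerivAt_sum_orderDensity n j x)
    ((continuous_orderDensity n j).neg.intervalIntegrable y 1)
  rw [hone, zero_sub, integral_neg] at h
  exact neg_injective h

theorem integral_orderDensity {n j : ℕ} (hj : j ≤ n) :
    ∫ x in (0 : ℝ)..1, orderDensity n j x = 1 / (n + 1).factorial := by
  rw [integral_orderDensity_right_eq_sum_range hj]
  simp [orderDensity, bernsteinPolynomial.eval_at_0, ← sum_div]

theorem sum_orderDensity (n : ℕ) (y : ℝ) :
    ∑ p : Fin (n + 1), orderDensity n p y = 1 / n.factorial := by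
  have h := congrArg (Polynomial.eval y) (bernsteinPolynomial.sum ℝ n)
  rw [Polynomial.eval_finsetSum, Polynomial.eval_one] at h
  rw [Fin.sum_univ_eq_sum_range fun p ↦ orderDensity n p y]
  simp only [orderDensity, ← sum_div, h]

theorem integral_orderDensity_right {n : ℕ} (j : Fin (n + 1)) (y : ℝ) :
    ∫ x in y..1, orderDensity n j x =
      ∑ p : Fin (n + 2) with ¬j.castSucc < p, orderDensity (n + 1) p y := by
  have hIic : ({p : Fin (n + 2) | ¬j.castSucc < p} : Finset _) = Iic j.castSucc := by
    ext p
    simp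
  rw [integral_orderDensity_right_eq_sum_range (Nat.lt_succ_iff.1 j.is_lt), hIic,
    Nat.range_succ_eq_Iic, ← Fin.val_castSucc j, ← Fin.map_valEmbedding_Iic, sum_map]
  rfl

theorem integral_orderDensity_left {n : ℕ} (j : Fin (n + 1)) (y : ℝ) :
    ∫ x in (0 : ℝ)..y, orderDensity n j x =
      ∑ p : Fin (n + 2) with j.castSucc < p, orderDensity (n + 1) p y := by
  have hint (a b : ℝ) : IntervalIntegrable (orderDensity n j) MeasureTheory.volume a b :=
    (continuous_orderDensity n j).intervalIntegrable a b
  have htotal := sum_filter_add_sum_filter_not univ (fun p : Fin (n + 2) ↦ j.castSucc < p)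
    fun p ↦ orderDensity (n + 1) p y
  rw [sum_orderDensity, ← integral_orderDensity (Nat.lt_succ_iff.1 j.is_lt),
    ← integral_orderDensity_right, ← integral_add_adjacent_intervals (hint 0 y) (hint y 1)]
    at htotal
  exact (add_right_cancel htotal).symm

end OrderDensity

section ExtendPerm

variable {n : ℕ} {p : Fin (n + 2)} {τ : Equiv.Perm (Fin (n + 1))}

/-- The permutation whose last value is `p` and whose other values are in the same relative order
as those of `τ`. -/
def extendPerm (p : Fin (n + 2)) (τ : Equiv.Perm (Fin (n + 1))) : Equiv.Perm (Fin (n + 2)) :=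
  ((finSuccEquiv' (Fin.last (n + 1))).trans (Equiv.optionCongr τ)).trans (finSuccEquiv' p).symm

@[simp]
theorem extendPerm_last : extendPerm p τ (Fin.last (n + 1)) = p := by
  simp [extendPerm]

@[simp]
theorem extendPerm_castSucc (i : Fin (n + 1)) :
    extendPerm p τ i.castSucc = p.succAbove (τ i) := by
  have : finSuccEquiv' (Fin.last (n + 1)) i.castSucc = some i := by
    rw [← Fin.succAbove_last, finSuccEquiv'_succAbove]
  simp [extendPerm, this]

theorem extendPerm_mk {k : ℕ} (hk : k < n + 1) :
    extendPerm p τ ⟨k, by omega⟩ = p.succAbove (τ ⟨k, hk⟩) :=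
  extendPerm_castSucc ⟨k, hk⟩

theorem bijective_extendPerm (n : ℕ) :
    Function.Bijective fun q : Fin (n + 2) × Equiv.Perm (Fin (n + 1)) ↦ extendPerm q.1 q.2 := by
  rw [Fintype.bijective_iff_injective_and_card]
  refine ⟨?_, by simp [Fintype.card_perm, Nat.factorial_succ (n + 1)]⟩
  rintro ⟨p, τ⟩ ⟨q, ρ⟩ (h : extendPerm p τ = extendPerm q ρ)
  obtain rfl : p = q := by simpa using DFunLike.congr_fun h (Fin.last (n + 1))
  have hτ : τ = ρ := Equiv.ext fun i ↦ by simpa using DFunLike.congr_fun h i.castSucc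
  rw [hτ]

theorem sum_perm_eq_sum_extendPerm {M : Type*} [AddCommMonoid M]
    (f : Equiv.Perm (Fin (n + 2)) → M) :
    ∑ σ, f σ = ∑ τ : Equiv.Perm (Fin (n + 1)), ∑ p : Fin (n + 2), f (extendPerm p τ) := by
  rw [← (bijective_extendPerm n).sum_comp f, Fintype.sum_prod_type, Finset.sum_comm]

/-- `EndsUp σ` says that the last step of `σ` is an ascent. A permutation of one element has no
last step and does not end up. -/
def EndsUp (σ : Equiv.Perm (Fin (n + 1))) : Prop :=
  ∃ _ : 1 ≤ n, σ ⟨n - 1, by omega⟩ < σ (Fin.last n)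

theorem endsUp_extendPerm_iff : EndsUp (extendPerm p τ) ↔ (τ (Fin.last n)).castSucc < p := by
  have hlast : extendPerm p τ ⟨n + 1 - 1, by omega⟩ = p.succAbove (τ (Fin.last n)) :=
    extendPerm_castSucc (Fin.last n)
  simp only [EndsUp, hlast, extendPerm_last, Fin.succAbove_lt_iff_castSucc_lt, exists_prop,
    Nat.le_add_left, true_and]

theorem isPeak_extendPerm_iff {i : ℕ} (hi : i < n + 1) :
    IsPeak (extendPerm p τ) i ↔ IsPeak τ i := by
  simp only [IsPeak, extendPerm_mk (show i - 2 < n + 1 by omega),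
    extendPerm_mk (show i - 1 < n + 1 by omega), extendPerm_mk hi,
    Fin.succAbove_lt_succAbove_iff, hi, hi.trans n.succ.lt_succ_self, exists_true_left]

theorem isPeak_extendPerm_succ_iff :
    IsPeak (extendPerm p τ) (n + 1) ↔ EndsUp τ ∧ ¬EndsUp (extendPerm p τ) := by
  have hlast : extendPerm p τ ⟨n + 1, by omega⟩ = p := extendPerm_last
  have hprev : extendPerm p τ ⟨n + 1 - 1, by omega⟩ = p.succAbove (τ (Fin.last n)) :=
    extendPerm_castSucc (Fin.last n)
  rw [endsUp_extendPerm_iff, not_lt, ← Fin.lt_succAbove_iff_le_castSucc]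
  constructor
  · rintro ⟨h₂, _, hup, hdown⟩
    rw [extendPerm_mk (by omega), hprev, Fin.succAbove_lt_succAbove_iff] at hup
    rw [hlast, hprev] at hdown
    exact ⟨⟨by omega, hup⟩, hdown⟩
  · rintro ⟨⟨h₁, hup⟩, hdown⟩
    refine ⟨by omega, by omega, ?_, ?_⟩
    · rw [extendPerm_mk (by omega), hprev, Fin.succAbove_lt_succAbove_iff]
      exact hup
    · rwa [hlast, hprev]

/-- The positions of the peaks of `σ` are those of the elements of `S` that do not exceed the last
position. -/
def PeaksAgree (S : Finset ℕ) (σ : Equiv.Perm (Fin (n + 1))) : Prop :=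
  ∀ i < n + 1, (IsPeak σ i ↔ i ∈ S)

theorem peaksAgree_extendPerm_iff {S : Finset ℕ} :
    PeaksAgree S (extendPerm p τ) ↔
      PeaksAgree S τ ∧ (EndsUp τ ∧ ¬EndsUp (extendPerm p τ) ↔ n + 1 ∈ S) := by
  simp only [PeaksAgree, Nat.forall_lt_succ_right (n := n + 1), isPeak_extendPerm_succ_iff]
  refine and_congr_left fun _ ↦ forall₂_congr fun i hi ↦ ?_
  rw [isPeak_extendPerm_iff hi]

theorem peakSet_eq_iff_peaksAgree {S : Finset ℕ} (hS : ∀ i ∈ S, i < n + 1)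
    {σ : Equiv.Perm (Fin (n + 1))} : peakSet σ = S ↔ PeaksAgree S σ := by
  simp only [Finset.ext_iff, peakSet, Finset.mem_filter, Finset.mem_range, PeaksAgree]
  exact ⟨fun h i hi ↦ by rw [← h i, and_iff_right hi],
    fun h i ↦ ⟨fun hi ↦ (h i hi.1).1 hi.2, fun hi ↦ ⟨hS i hi, (h i (hS i hi)).2 hi⟩⟩⟩

end ExtendPerm

section PermDensity

open intervalIntegral Finset

variable {n : ℕ}

open Classical in
/-- The density at `y` of the value of the last of `n + 1` independent uniform variables on
`[0, 1]`, on the event that their relative order satisfies `Q`. -/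
noncomputable def permDensity (Q : Equiv.Perm (Fin (n + 1)) → Prop) (y : ℝ) : ℝ :=
  ∑ σ with Q σ, orderDensity n (σ (Fin.last n)) y

@[fun_prop]
theorem continuous_permDensity (Q : Equiv.Perm (Fin (n + 1)) → Prop) :
    Continuous (permDensity Q) := by
  unfold permDensity
  fun_prop

theorem permDensity_eq_zero {Q : Equiv.Perm (Fin (n + 1)) → Prop} (h : ∀ σ, ¬Q σ) (y : ℝ) :
    permDensity Q y = 0 := by
  simp [permDensity, h]

theorem permDensity_and_add_permDensity_and_not (Q R : Equiv.Perm (Fin (n + 1)) → Prop) (y : ℝ) :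
    permDensity (fun σ ↦ Q σ ∧ R σ) y + permDensity (fun σ ↦ Q σ ∧ ¬R σ) y = permDensity Q y := by
  simp only [permDensity, sum_filter, ← sum_add_distrib]
  refine sum_congr rfl fun σ _ ↦ ?_
  by_cases hQ : Q σ <;> by_cases hR : R σ <;> simp [hQ, hR]

open Classical in
theorem integral_permDensity (Q : Equiv.Perm (Fin (n + 1)) → Prop) (a b : ℝ) :
    ∫ x in a..b, permDensity Q x =
      ∑ σ with Q σ, ∫ x in a..b, orderDensity n (σ (Fin.last n)) x :=
  integral_finsetSum fun _ _ ↦ (continuous_orderDensity _ _).intervalIntegrable _ _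

open Classical in
theorem integral_permDensity_eq_card (Q : Equiv.Perm (Fin (n + 1)) → Prop) :
    ∫ x in (0 : ℝ)..1, permDensity Q x = #{σ | Q σ} / (n + 1).factorial := by
  rw [integral_permDensity, div_eq_mul_one_div, ← nsmul_eq_mul]
  exact sum_eq_card_nsmul fun σ _ ↦ integral_orderDensity (Nat.lt_succ_iff.1 (σ _).is_lt)

open Classical in
theorem permDensity_eq_sum_extendPerm {Q : Equiv.Perm (Fin (n + 1)) → Prop}
    {R : Equiv.Perm (Fin (n + 1)) → Fin (n + 2) → Prop} [∀ τ, DecidablePred (R τ)]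
    {Q' : Equiv.Perm (Fin (n + 2)) → Prop}
    (h : ∀ p τ, Q' (extendPerm p τ) ↔ Q τ ∧ R τ p) (y : ℝ) :
    permDensity Q' y = ∑ τ with Q τ, ∑ p with R τ p, orderDensity (n + 1) p y := by
  simp only [permDensity, sum_filter, sum_perm_eq_sum_extendPerm, h, extendPerm_last, ite_and]
  refine sum_congr rfl fun τ _ ↦ ?_
  split_ifs <;> simp

theorem permDensity_eq_integral_left {Q : Equiv.Perm (Fin (n + 1)) → Prop}
    {Q' : Equiv.Perm (Fin (n + 2)) → Prop}
    (h : ∀ p τ, Q' (extendPerm p τ) ↔ Q τ ∧ EndsUp (extendPerm p τ)) (y : ℝ) :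
    permDensity Q' y = ∫ x in (0 : ℝ)..y, permDensity Q x := by
  simp only [endsUp_extendPerm_iff] at h
  rw [permDensity_eq_sum_extendPerm h, integral_permDensity]
  exact sum_congr rfl fun τ _ ↦ (integral_orderDensity_left _ y).symm

theorem permDensity_eq_integral_right {Q : Equiv.Perm (Fin (n + 1)) → Prop}
    {Q' : Equiv.Perm (Fin (n + 2)) → Prop}
    (h : ∀ p τ, Q' (extendPerm p τ) ↔ Q τ ∧ ¬EndsUp (extendPerm p τ)) (y : ℝ) :
    permDensity Q' y = ∫ x in y..1, permDensity Q x := by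
  simp only [endsUp_extendPerm_iff] at h
  rw [permDensity_eq_sum_extendPerm h, integral_permDensity]
  exact sum_congr rfl fun τ _ ↦ (integral_orderDensity_right _ y).symm

end PermDensity

section UpDownDensity

open intervalIntegral Finset

variable {S T : Finset ℕ} {n : ℕ}

/-- The density of the last of `n + 1` independent uniform variables, on the event that the peaks
of the sequence are prescribed by `S` and its last step is an ascent. -/
noncomputable def upDensity (S : Finset ℕ) (n : ℕ) : ℝ → ℝ :=
  permDensity fun σ : Equiv.Perm (Fin (n + 1)) ↦ PeaksAgree S σ ∧ EndsUp σ

/-- The density of the last of `n + 1` independent uniform variables, on the event that the peaks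
of the sequence are prescribed by `S` and its last step, if any, is a descent. -/
noncomputable def downDensity (S : Finset ℕ) (n : ℕ) : ℝ → ℝ :=
  permDensity fun σ : Equiv.Perm (Fin (n + 1)) ↦ PeaksAgree S σ ∧ ¬EndsUp σ

theorem upDensity_zero (S : Finset ℕ) (y : ℝ) : upDensity S 0 y = 0 :=
  permDensity_eq_zero (by simp [EndsUp]) y

theorem downDensity_zero (hS : 0 ∉ S) (y : ℝ) : downDensity S 0 y = 1 := by
  simp [downDensity, permDensity, EndsUp, PeaksAgree, IsPeak, hS, orderDensity,
    bernsteinPolynomial]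

theorem upDensity_congr (h : ∀ i < n + 1, (i ∈ S ↔ i ∈ T)) : upDensity S n = upDensity T n := by
  have hpeaks (σ : Equiv.Perm (Fin (n + 1))) : PeaksAgree S σ ↔ PeaksAgree T σ :=
    forall₂_congr fun i hi ↦ by rw [h i hi]
  simp only [upDensity, hpeaks]

theorem upDensity_succ_of_mem (hn : n + 1 ∈ S) (y : ℝ) : upDensity S (n + 1) y = 0 := by
  refine permDensity_eq_zero (fun σ ⟨hagree, hup⟩ ↦ ?_) y
  obtain ⟨⟨p, τ⟩, rfl⟩ := (bijective_extendPerm n).2 σ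
  exact ((peaksAgree_extendPerm_iff.1 hagree).2.2 hn).2 hup

theorem downDensity_succ_of_mem (hn : n + 1 ∈ S) (y : ℝ) :
    downDensity S (n + 1) y = ∫ x in y..1, upDensity S n x :=
  permDensity_eq_integral_right
    (fun p τ ↦ by rw [peaksAgree_extendPerm_iff]; tauto) y

theorem upDensity_succ_of_notMem (hn : n + 1 ∉ S) (y : ℝ) :
    upDensity S (n + 1) y = ∫ x in (0 : ℝ)..y, upDensity S n x + downDensity S n x := by
  simp only [upDensity, downDensity, permDensity_and_add_permDensity_and_not]
  exact permDensity_eq_integral_left (fun p τ ↦ by rw [peaksAgree_extendPerm_iff]; tauto) y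

theorem downDensity_succ_of_notMem (hn : n + 1 ∉ S) (y : ℝ) :
    downDensity S (n + 1) y = ∫ x in y..1, downDensity S n x :=
  permDensity_eq_integral_right
    (fun p τ ↦ by rw [peaksAgree_extendPerm_iff]; tauto) y

open Classical in
theorem numPeakSet_eq (hS : ∀ i ∈ S, i < n + 1) :
    (numPeakSet (n + 1) S : ℝ) = (n + 1).factorial * upDensity S (n + 1) 1 := by
  have hup : upDensity S (n + 1) 1 =
      #{σ : Equiv.Perm (Fin (n + 1)) | PeaksAgree S σ} / (n + 1).factorial := by
    rw [← integral_permDensity_eq_card]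
    refine permDensity_eq_integral_left (fun p τ ↦ ?_) 1
    have : n + 1 ∉ S := fun h ↦ (hS _ h).false
    rw [peaksAgree_extendPerm_iff]
    tauto
  simp only [numPeakSet, peakSet_eq_iff_peaksAgree hS]
  rw [hup, mul_div_cancel₀ _ (by positivity), Nat.card_eq_fintype_card, Fintype.card_subtype]

end UpDownDensity

section PartIntegral

open intervalIntegral Set

theorem integral_partKernel_add_truncPow (p : ℕ) {x : ℝ} (hx : 0 ≤ x) (y : ℝ) :
    ∫ z in (0 : ℝ)..y, partKernel (p + 2) x z + truncPow (p + 1) x z = partKernel (p + 3) x y := by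
  have hcont : Continuous fun z ↦ partKernel (p + 2) x z + truncPow (p + 1) x z := by fun_prop
  have hzero : partKernel (p + 3) x 0 = 0 := by simp [partKernel, abs_of_nonneg hx]
  rw [integral_eq_sub_of_hasDerivAt (fun z _ ↦ hasDerivAt_partKernel p x z)
    (hcont.intervalIntegrable _ _), hzero, sub_zero]

theorem integral_truncPow (p : ℕ) {x : ℝ} (hx : x ≤ 1) (y : ℝ) :
    ∫ z in y..1, truncPow (p + 1) x z = truncPow (p + 2) x y := by
  have hcont : Continuous fun z ↦ truncPow (p + 1) x z := by fun_prop
  have hone : truncPow (p + 2) x 1 = 0 := by simp [truncPow, hx]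
  have h := integral_eq_sub_of_hasDerivAt (fun z _ ↦ hasDerivAt_truncPow_right p x z)
    (hcont.neg.intervalIntegrable y 1)
  rw [integral_neg, hone, zero_sub] at h
  exact neg_injective h

theorem integral_integral_mul_eq {F G : ℝ → ℝ} {H : ℝ → ℝ → ℝ} {a b : ℝ} (hF : Continuous F)
    (hH : Continuous (Function.uncurry H))
    (hG : ∀ x ∈ Icc (0 : ℝ) 1, ∫ z in a..b, H x z = G x) :
    ∫ z in a..b, ∫ x in (0 : ℝ)..1, F x * H x z = ∫ x in (0 : ℝ)..1, F x * G x := by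
  rw [integral_integral_swap_of_continuous (by unfold Function.uncurry; fun_prop)]
  refine integral_congr fun x hx ↦ ?_
  rw [uIcc_of_le zero_le_one] at hx
  simp only [integral_const_mul, hG x hx]

theorem integral_integral_partKernel_add_truncPow {F : ℝ → ℝ} (hF : Continuous F) (p : ℕ)
    (y : ℝ) :
    ∫ z in (0 : ℝ)..y, (∫ x in (0 : ℝ)..1, F x * partKernel (p + 2) x z) +
        ∫ x in (0 : ℝ)..1, F x * truncPow (p + 1) x z =
      ∫ x in (0 : ℝ)..1, F x * partKernel (p + 3) x y := by
  have hsum (z : ℝ) : (∫ x in (0 : ℝ)..1, F x * partKernel (p + 2) x z) +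
      ∫ x in (0 : ℝ)..1, F x * truncPow (p + 1) x z =
        ∫ x in (0 : ℝ)..1, F x * (partKernel (p + 2) x z + truncPow (p + 1) x z) := by
    have hK : Continuous fun x ↦ F x * partKernel (p + 2) x z := by fun_prop
    have ht : Continuous fun x ↦ F x * truncPow (p + 1) x z := by fun_prop
    simp only [mul_add, integral_add (hK.intervalIntegrable _ _) (ht.intervalIntegrable _ _)]
  simp only [hsum]
  exact integral_integral_mul_eq hF (by unfold Function.uncurry; fun_prop)
    fun x hx ↦ integral_partKernel_add_truncPow p hx.1 y

theorem integral_integral_right_eq_integral_partKernel {F : ℝ → ℝ} (hF : Continuous F) {y : ℝ}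
    (hy : y ∈ Icc (0 : ℝ) 1) :
    ∫ z in (0 : ℝ)..y, ∫ x in z..1, F x = ∫ x in (0 : ℝ)..1, F x * partKernel 2 x y := by
  have hprim {f : ℝ → ℝ} (hf : Continuous f) (a z : ℝ) :
      HasDerivAt (fun z ↦ ∫ x in a..z, f x) (f z) z :=
    (hf.integral_hasStrictDerivAt a z).hasDerivAt
  have hG : Continuous fun z ↦ ∫ x in (1 : ℝ)..z, F x :=
    continuous_iff_continuousAt.2 fun z ↦ (hprim hF 1 z).continuousAt
  have h := integral_min_mul_eq hF (hprim hG 0) (hprim hF 1) hy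
  simp only [integral_same, mul_zero, add_zero, zero_sub] at h
  simp only [partKernel_two, mul_comm (F _), min_comm _ y]
  rw [h, ← integral_neg]
  simp only [← integral_symm]

theorem integral_integral_right_eq_integral_truncPow {F : ℝ → ℝ} (hF : Continuous F) {y : ℝ}
    (hy : y ∈ Icc (0 : ℝ) 1) :
    ∫ z in y..1, ∫ x in z..1, F x = ∫ x in (0 : ℝ)..1, F x * truncPow 1 x y := by
  have hcont : Continuous fun z ↦ ∫ x in z..1, F x := by
    simp only [integral_symm (1 : ℝ)]
    exact (continuous_primitive hF.intervalIntegrable 1).neg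
  have hsplit := integral_add_adjacent_intervals
    (hcont.intervalIntegrable (μ := MeasureTheory.volume) 0 y) (hcont.intervalIntegrable y 1)
  rw [integral_integral_right_eq_integral_partKernel hF hy,
    integral_integral_right_eq_integral_partKernel hF (right_mem_Icc.2 zero_le_one)] at hsplit
  have hK (y : ℝ) : Continuous fun x ↦ F x * partKernel 2 x y := by fun_prop
  rw [eq_sub_of_add_eq' hsplit,
    ← integral_sub ((hK 1).intervalIntegrable _ _) ((hK y).intervalIntegrable _ _)]
  refine integral_congr fun x hx ↦ ?_
  rw [uIcc_of_le zero_le_one] at hx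
  have hmin : x - min x y = max (x - y) 0 := by
    rw [max_comm, ← max_sub_sub_left, sub_self]
  simp only [partKernel_two, min_eq_left hx.2, ← mul_sub, hmin, truncPow, pow_one,
    Nat.factorial_one, Nat.cast_one, div_one]

end PartIntegral

section Transfer

open intervalIntegral Set

variable {S : Finset ℕ} {n : ℕ}

theorem upDensity_downDensity_add {A B : ℕ → ℝ → ℝ}
    (hA : ∀ p, ∀ y ∈ Icc (0 : ℝ) 1, ∫ x in (0 : ℝ)..y, A p x + B p x = A (p + 1) y)
    (hB : ∀ p, ∀ y ∈ Icc (0 : ℝ) 1, ∫ x in y..1, B p x = B (p + 1) y)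
    (hn : ∀ y ∈ Icc (0 : ℝ) 1, upDensity S n y = A 0 y ∧ downDensity S n y = B 0 y) {p : ℕ}
    (hS : ∀ k, n < k → k ≤ n + p → k ∉ S) :
    ∀ y ∈ Icc (0 : ℝ) 1, upDensity S (n + p) y = A p y ∧ downDensity S (n + p) y = B p y := by
  induction p with
  | zero => exact hn
  | succ p ih =>
    have ih := ih fun k hk hkp ↦ hS k hk (by omega)
    have hnot : n + p + 1 ∉ S := hS _ (by omega) le_rfl
    intro y hy
    rw [← add_assoc, upDensity_succ_of_notMem hnot, downDensity_succ_of_notMem hnot, ← hA p y hy,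
      ← hB p y hy]
    refine ⟨integral_congr fun x hx ↦ ?_, integral_congr fun x hx ↦ ?_⟩
    · obtain ⟨hup, hdown⟩ := ih x (uIcc_subset_Icc (left_mem_Icc.2 zero_le_one) hy hx)
      simp only [hup, hdown]
    · exact (ih x (uIcc_subset_Icc hy (right_mem_Icc.2 zero_le_one) hx)).2

theorem upDensity_eq_partKernel (hS : ∀ k ≤ n, k ∉ S) {y : ℝ} (hy : y ∈ Icc (0 : ℝ) 1) :
    upDensity S n y = partKernel (n + 1) 1 y := by
  have hA (p : ℕ) (y : ℝ) (hy : y ∈ Icc (0 : ℝ) 1) :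
      ∫ x in (0 : ℝ)..y, partKernel (p + 1) 1 x + truncPow p 1 x = partKernel (p + 2) 1 y := by
    cases p with
    | zero => simp [partKernel_one, partKernel_two, truncPow, hy.2]
    | succ p => exact integral_partKernel_add_truncPow p zero_le_one y
  have hB (p : ℕ) (y : ℝ) (hy : y ∈ Icc (0 : ℝ) 1) :
      ∫ x in y..1, truncPow p 1 x = truncPow (p + 1) 1 y := by
    cases p with
    | zero => simp [truncPow, hy.2]
    | succ p => exact integral_truncPow p le_rfl y
  have hzero (y : ℝ) (_ : y ∈ Icc (0 : ℝ) 1) :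
      upDensity S 0 y = partKernel 1 1 y ∧ downDensity S 0 y = truncPow 0 1 y := by
    rw [upDensity_zero, downDensity_zero (hS 0 n.zero_le), partKernel_one]
    simp [truncPow]
  have h := upDensity_downDensity_add (A := fun p ↦ partKernel (p + 1) 1) hA hB hzero
    (p := n) (fun k _ hk ↦ hS k (by omega)) y hy
  simpa only [zero_add] using h.1

theorem upDensity_add_eq_integral (hn : n + 1 ∈ S) {m : ℕ} (hm : 0 < m)
    (hS : ∀ k, n + 1 < k → k ≤ n + m → k ∉ S) {y : ℝ} (hy : y ∈ Icc (0 : ℝ) 1) :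
    upDensity S (n + m) y = ∫ x in (0 : ℝ)..1, upDensity S n x * partKernel m x y := by
  have hF : Continuous (upDensity S n) := continuous_permDensity _
  rcases m with _ | _ | p
  · exact absurd hm (lt_irrefl 0)
  · simp [upDensity_succ_of_mem hn, partKernel_one]
  have hstart (y : ℝ) (hy : y ∈ Icc (0 : ℝ) 1) :
      upDensity S (n + 2) y = ∫ x in (0 : ℝ)..1, upDensity S n x * partKernel 2 x y ∧
        downDensity S (n + 2) y = ∫ x in (0 : ℝ)..1, upDensity S n x * truncPow 1 x y := by
    have hnot : n + 1 + 1 ∉ S := hS _ (by omega) (by omega)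
    rw [upDensity_succ_of_notMem hnot, downDensity_succ_of_notMem hnot]
    simp only [upDensity_succ_of_mem hn, downDensity_succ_of_mem hn, zero_add]
    exact ⟨integral_integral_right_eq_integral_partKernel hF hy,
      integral_integral_right_eq_integral_truncPow hF hy⟩
  have h := upDensity_downDensity_add
    (fun p y _ ↦ integral_integral_partKernel_add_truncPow hF p y)
    (fun p y _ ↦ integral_integral_mul_eq hF (continuous_truncPow _)
      fun x hx ↦ integral_truncPow p hx.2 y) hstart (p := p)
    (fun k hk hkp ↦ hS k (by omega) (by omega)) y hy
  rw [← h.1]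
  congr 1
  omega

end Transfer

section CompPeaks

open Finset

theorem compPeaks_singleton (a : ℕ) : compPeaks [a] = ∅ := by
  simp [compPeaks]

theorem compPeaks_append_singleton {u : List ℕ} (hu : u ≠ []) (a : ℕ) :
    compPeaks (u ++ [a]) = insert u.sum (compPeaks u) := by
  have hlen : (u ++ [a]).length - 1 = u.length - 1 + 1 := by
    have := List.length_pos_iff.2 hu
    simp only [List.length_append, List.length_singleton]
    omega
  rw [compPeaks, hlen, range_add_one, image_insert, compPeaks]
  congr 1
  · rw [← hlen]
    simp
  · refine image_congr fun i hi ↦ ?_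
    rw [coe_range, Set.mem_Iio] at hi
    simp only [List.take_append_of_le_length (show i + 1 ≤ u.length by omega)]

theorem mem_Ioo_of_mem_compPeaks {c : List ℕ} (hc : ∀ m ∈ c, 0 < m) {i : ℕ}
    (hi : i ∈ compPeaks c) : i ∈ Ioo 0 c.sum := by
  induction c using List.reverseRecOn generalizing i with
  | nil => simp [compPeaks] at hi
  | append_singleton u a ih =>
    simp only [List.forall_mem_append, List.forall_mem_singleton] at hc
    rcases eq_or_ne u [] with rfl | hu
    · simp [compPeaks_singleton] at hi
    rw [compPeaks_append_singleton hu, mem_insert] at hi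
    rw [List.sum_append, List.sum_singleton]
    rcases hi with rfl | hi
    · exact mem_Ioo.2 ⟨List.sum_pos _ hc.1 hu, by omega⟩
    · have := mem_Ioo.1 (ih hc.1 hi)
      exact mem_Ioo.2 ⟨this.1, by omega⟩

theorem upDensity_compPeaks {d : List ℕ} (hd : d ≠ []) (hpos : ∀ m ∈ d, 0 < m) {y : ℝ}
    (hy : y ∈ Set.Icc (0 : ℝ) 1) :
    upDensity (compPeaks d) (d.sum - 1) y = wordKernel d 1 y := by
  induction d using List.reverseRecOn generalizing y with
  | nil => exact absurd rfl hd
  | append_singleton u a ih =>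
    simp only [List.forall_mem_append, List.forall_mem_singleton] at hpos
    obtain ⟨hu0, ha⟩ := hpos
    rcases eq_or_ne u [] with rfl | hu
    · rw [List.nil_append, compPeaks_singleton, upDensity_eq_partKernel (by simp) hy,
        wordKernel_singleton, List.sum_singleton, Nat.sub_add_cancel ha]
    have hsum : 0 < u.sum := List.sum_pos _ hu0 hu
    have hlocal : upDensity (insert u.sum (compPeaks u)) (u.sum - 1) =
        upDensity (compPeaks u) (u.sum - 1) :=
      upDensity_congr fun i hi ↦ by rw [mem_insert, or_iff_right (by omega)]
    have hnot (k : ℕ) (hk : u.sum < k) : k ∉ insert u.sum (compPeaks u) := by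
      rw [mem_insert, not_or]
      exact ⟨hk.ne', fun h ↦ (mem_Ioo.1 (mem_Ioo_of_mem_compPeaks hu0 h)).2.not_gt hk⟩
    rw [compPeaks_append_singleton hu, wordKernel_append hu (List.cons_ne_nil a []),
      wordKernel_singleton, List.sum_append, List.sum_singleton, Nat.sub_add_comm hsum,
      upDensity_add_eq_integral (by simp [Nat.sub_add_cancel hsum]) ha
        (fun k hk _ ↦ hnot k (by omega)) hy, hlocal]
    refine intervalIntegral.integral_congr fun x hx ↦ ?_
    rw [Set.uIcc_of_le zero_le_one] at hx
    simp only [ih hu hu0 hx]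

theorem pos_append_succ {u : List ℕ} {l : ℕ} (hpos : ∀ m ∈ u ++ [l], 0 < m) :
    ∀ m ∈ u ++ [l + 1], 0 < m := by
  simp only [List.forall_mem_append, List.forall_mem_singleton] at hpos ⊢
  exact ⟨hpos.1, l.succ_pos⟩

theorem Pcomp_append_singleton {u : List ℕ} {l : ℕ} (hpos : ∀ m ∈ u ++ [l], 0 < m) :
    (Pcomp (u ++ [l]) : ℝ) = (u ++ [l]).sum.factorial * weight (u ++ [l + 1]) := by
  have hpeaks : compPeaks (u ++ [l]) = compPeaks (u ++ [l + 1]) := by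
    rcases eq_or_ne u [] with rfl | hu
    · simp only [List.nil_append, compPeaks_singleton]
    · rw [compPeaks_append_singleton hu, compPeaks_append_singleton hu]
  have hsum : (u ++ [l + 1]).sum - 1 = (u ++ [l]).sum := by
    simp only [List.sum_append, List.sum_singleton]
    omega
  obtain ⟨n, hn⟩ : ∃ n, (u ++ [l]).sum = n + 1 :=
    Nat.exists_eq_add_one.2 (List.sum_pos _ hpos (by simp))
  have hlt (i : ℕ) (hi : i ∈ compPeaks (u ++ [l])) : i < n + 1 :=
    hn ▸ (mem_Ioo.1 (mem_Ioo_of_mem_compPeaks hpos hi)).2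
  rw [Pcomp, hn, numPeakSet_eq hlt, ← hn, weight, ← hsum, hpeaks,
    upDensity_compPeaks (by simp) (pos_append_succ hpos)
      (Set.right_mem_Icc.2 zero_le_one)]

end CompPeaks

section Main

theorem IsMaximal.weight_le {u d : List ℕ} {l : ℕ} (hmax : IsMaximal (u ++ [l]))
    (hpos : ∀ m ∈ u ++ [l], 0 < m) (h2 : ∀ m ∈ d, 2 ≤ m) (hsum : d.sum = (u ++ [l + 1]).sum) :
    weight d ≤ weight (u ++ [l + 1]) := by
  rcases List.eq_nil_or_concat d with rfl | ⟨v, _ | m, rfl⟩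
  · simp at hsum
  · exact absurd (h2 0 (by simp)) (by simp)
  rw [List.concat_eq_append] at *
  have hv : ∀ a ∈ v ++ [m], 0 < a := by
    simp only [List.forall_mem_append, List.forall_mem_singleton] at h2 ⊢
    exact ⟨fun a ha ↦ two_pos.trans_le (h2.1 a ha), by omega⟩
  have hsum : (v ++ [m]).sum = (u ++ [l]).sum := by
    simp only [List.sum_append, List.sum_singleton] at hsum ⊢
    omega
  have h : (Pcomp (v ++ [m]) : ℝ) ≤ Pcomp (u ++ [l]) := by exact_mod_cast hmax _ ⟨hv, hsum⟩
  rw [Pcomp_append_singleton hv, Pcomp_append_singleton hpos, hsum] at h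
  exact le_of_mul_le_mul_left h (by positivity)

theorem IsMaximal.isOptimal {u : List ℕ} {l : ℕ} (hmax : IsMaximal (u ++ [l]))
    (hpos : ∀ m ∈ u ++ [l], 0 < m) (hlen : 3 ≤ (u ++ [l]).length) :
    IsOptimal (u ++ [l + 1]) where
  two_le := by
    have hsum : 2 ≤ (u ++ [l + 1]).sum := by
      have := hpos l (by simp)
      simp only [List.sum_append, List.sum_singleton]
      omega
    have hweight : 0 < weight (u ++ [l + 1]) :=
      (wordKernel_pos (List.cons_ne_nil _ []) (by simpa using hsum) one_pos one_pos).trans_le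
        (hmax.weight_le hpos (d := [(u ++ [l + 1]).sum]) (by simpa using hsum) (by simp))
    intro m hm
    have hne : m ≠ 1 := by
      rintro rfl
      exact hweight.ne' (wordKernel_eq_zero_of_one_mem hm 1 1)
    have := pos_append_succ hpos m hm
    omega
  three_le_length := by simpa using hlen
  weight_le _ h2 hsum := hmax.weight_le hpos h2 hsum

theorem IsMaximal.isReducedWord {c : List ℕ} (hmax : IsMaximal c) (hpos : ∀ m ∈ c, 0 < m)
    (hlen : 3 ≤ c.length) : IsReducedWord c := by
  rcases List.eq_nil_or_concat c with rfl | ⟨u, l, rfl⟩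
  · simp at hlen
  rw [List.concat_eq_append] at *
  exact (hmax.isOptimal hpos hlen).isReducedWord

end Main

theorem canonical_form_one (n : ℕ) (c : List ℕ) (hc : IsComposition n c)
    (hlen : 3 ≤ c.length) (hmax : IsMaximal c) :
    ∃ (k : ℕ) (x : ℕ → List ℕ), 1 ≤ k ∧ c = chain3 x k ∧
      (x 0 = [] ∨ x 0 = [4]) ∧
      (x k = [] ∨ ∃ s, 1 ≤ s ∧ x k = List.replicate s 2) ∧
      (∀ i, 0 < i → i < k →
        x i = [] ∨ (∃ s, 1 ≤ s ∧ x i = List.replicate s 2) ∨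
          (∃ t, 1 ≤ t ∧ x i = List.replicate t 4)) := by
  have hred : IsReducedWord c := hmax.isReducedWord hc.1 hlen
  obtain ⟨k, x, rfl, h3⟩ := exists_chain3_eq c
  have hfirst := hred.first_block (prefix_chain3 x k) (h3 0 k.zero_le)
  refine ⟨k, x, ?_, rfl, hfirst, hred.last_block (suffix_chain3 x k) (h3 k le_rfl),
    fun i _ hi ↦ hred.block (infix_chain3 x hi.le) (h3 i hi.le)⟩
  by_contra! hk
  obtain rfl : k = 0 := Nat.lt_one_iff.1 hk
  rcases hfirst with h | h <;> simp [chain3, h] at hlen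
end
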